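/- arXiv:2510.13640 — 3 statements merged into one kernel-verified Lean document; each statement's English description precedes it below -/
import Mathlib

section
/- Let n, K be positive integers and let D_n^K := {Σ_{k=−nK}^{nK} λ_k δ_{k/n} : λ_k ≥ 0 for all k and Σ_k λ_k = 1}. Let F : D_n^K → ℝ be Lipschitz continuous with respect to W_1 on D_n^K, and assume: F is uniformly Dawson-differentiable on D_n^K, i.e. there is ΔF : D_n^K×ℝ → ℝ with sup_{m ∈ D_n^K, x ∈ [−K,K]} |(F((1−ε)m + ε·δ_x) − F(m))/ε − ΔF(m,x)| → 0 as ε → 0+; ∫_ℝ ΔF(m,x) dm(x) = 0 for all m ∈ D_n^K; x ↦ ΔF(m,x) is C^1 for each m ∈ D_n^K, m ↦ ΔF(m,x) is W_1-continuous on D_n^K for each x, and (m,x) ↦ ∂_x ΔF(m,x) is jointly continuous on D_n^K×ℝ. Then for all m, μ ∈ D_n^K: F(m) − F(μ) = ∫_0^1 ∫_ℝ ΔF((1−t)μ + t·m, x) d(m − μ)(x) dt. -/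
open MeasureTheory Filter Topology

noncomputable section

/-- `π` is a coupling of the measures `m` and `μ` on `ℝ`. -/
def IsCoupling (π : Measure (ℝ × ℝ)) (m μ : Measure ℝ) : Prop :=
  π.map Prod.fst = m ∧ π.map Prod.snd = μ

/-- The Wasserstein distance of order one between two measures on `ℝ`:
the infimum over couplings `π` of `∫ |x - y| dπ(x,y)`. -/
def W1 (m μ : Measure ℝ) : ℝ :=
  sInf {c : ℝ | ∃ π : Measure (ℝ × ℝ), IsCoupling π m μ ∧ c = ∫ p, |p.1 - p.2| ∂π}

/-- Membership in `P₁(ℝ)`: Borel probability measures on `ℝ` with finite first moment. -/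
def MemP1 (m : Measure ℝ) : Prop :=
  IsProbabilityMeasure m ∧ Integrable (fun x => |x|) m

/-- Membership in `P([-K,K])`: probability measures supported in `[-K,K]`. -/
def MemPK (K : ℝ) (m : Measure ℝ) : Prop :=
  IsProbabilityMeasure m ∧ m (Set.Icc (-K) K)ᶜ = 0

/-- The convex combination `(1-t)·m₀ + t·m` of two measures. -/
def lineSeg (m₀ m : Measure ℝ) (t : ℝ) : Measure ℝ :=
  ENNReal.ofReal (1 - t) • m₀ + ENNReal.ofReal t • m

/-- The integral of `f` against the signed difference `m - μ`:
`∫ f d(m - μ) = ∫ f dm - ∫ f dμ`. -/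
def dInt (f : ℝ → ℝ) (m μ : Measure ℝ) : ℝ := (∫ x, f x ∂m) - ∫ x, f x ∂μ

/-- `W₁`-(sequential) compactness of a subset of `P₁(ℝ)`. -/
def W1Compact (𝒦 : Set (Measure ℝ)) : Prop :=
  (∀ m ∈ 𝒦, MemP1 m) ∧
  ∀ u : ℕ → Measure ℝ, (∀ n, u n ∈ 𝒦) →
    ∃ m ∈ 𝒦, ∃ φ : ℕ → ℕ, StrictMono φ ∧
      Tendsto (fun n => W1 (u (φ n)) m) atTop (𝓝 0)

/-- Sublinearity in the real variable, uniformly over `W₁`-compact sets of measures. -/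
def SublinearOnCompacts (G : Measure ℝ → ℝ → ℝ) : Prop :=
  ∀ 𝒦 : Set (Measure ℝ), W1Compact 𝒦 →
    ∃ C > 0, ∀ m ∈ 𝒦, ∀ x : ℝ, |G m x| ≤ C * (1 + |x|)

/-- `W₁`-continuity of a function of the measure variable at a point of `P₁(ℝ)`. -/
def W1ContinuousAt (g : Measure ℝ → ℝ) (m : Measure ℝ) : Prop :=
  ∀ ε > 0, ∃ η > 0, ∀ μ, MemP1 μ → W1 μ m < η → |g μ - g m| < ε

/-- Joint continuity of `G : P₁(ℝ) × ℝ → ℝ`. -/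
def JointlyContinuous (G : Measure ℝ → ℝ → ℝ) : Prop :=
  ∀ m x, MemP1 m → ∀ ε > 0, ∃ η > 0, ∀ μ y, MemP1 μ →
    W1 μ m < η → |y - x| < η → |G μ y - G m x| < ε

/-- Joint continuity of `G : P₁(ℝ) × ℝ × ℝ → ℝ`. -/
def JointlyContinuous2 (G : Measure ℝ → ℝ → ℝ → ℝ) : Prop :=
  ∀ m x y, MemP1 m → ∀ ε > 0, ∃ η > 0, ∀ μ x' y', MemP1 μ →
    W1 μ m < η → |x' - x| < η → |y' - y| < η → |G μ x' y' - G m x y| < ε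

/-- `H` is a version of the (linear functional) derivative of `F : P₁(ℝ) → ℝ`. -/
def IsDerivVersion (F : Measure ℝ → ℝ) (H : Measure ℝ → ℝ → ℝ) : Prop :=
  Measurable (Function.uncurry H) ∧
  SublinearOnCompacts H ∧
  ∀ m m₀, MemP1 m → MemP1 m₀ →
    F m - F m₀ = ∫ t in (0:ℝ)..1, dInt (H (lineSeg m₀ m t)) m m₀

/-- `H` is the canonical derivative of `F : P₁(ℝ) → ℝ`: the version of the derivative
satisfying `∫ H(μ,x) dμ(x) = 0` for every `μ ∈ P₁(ℝ)`. -/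
def IsCanonicalDeriv (F : Measure ℝ → ℝ) (H : Measure ℝ → ℝ → ℝ) : Prop :=
  IsDerivVersion F H ∧ ∀ μ, MemP1 μ → ∫ x, H μ x ∂μ = 0

/-- `G : P₁(ℝ) × ℝ → ℝ` is of class `C^{0,1}`. -/
def IsC01 (G : Measure ℝ → ℝ → ℝ) : Prop :=
  (∀ m, MemP1 m → ContDiff ℝ 1 (G m)) ∧
  (∀ x : ℝ, ∀ m, MemP1 m → W1ContinuousAt (fun μ => G μ x) m) ∧
  SublinearOnCompacts G ∧
  JointlyContinuous (fun m x => deriv (G m) x)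

/-- `F : P₁(ℝ) → ℝ` is of class `C¹` with canonical derivative `H`. -/
def IsC1 (F : Measure ℝ → ℝ) (H : Measure ℝ → ℝ → ℝ) : Prop :=
  IsCanonicalDeriv F H ∧ IsC01 H

/-- Joint continuity on `P([-K,K]) × [-K,K]`. -/
def JointlyContinuousOnK (K : ℝ) (G : Measure ℝ → ℝ → ℝ) : Prop :=
  ∀ m x, MemPK K m → x ∈ Set.Icc (-K) K → ∀ ε > 0, ∃ η > 0,
    ∀ μ y, MemPK K μ → y ∈ Set.Icc (-K) K → W1 μ m < η → |y - x| < η →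
      |G μ y - G m x| < ε

/-- Joint continuity on `P([-K,K]) × [-K,K]²`. -/
def JointlyContinuousOnK2 (K : ℝ) (G : Measure ℝ → ℝ → ℝ → ℝ) : Prop :=
  ∀ m x y, MemPK K m → x ∈ Set.Icc (-K) K → y ∈ Set.Icc (-K) K → ∀ ε > 0, ∃ η > 0,
    ∀ μ x' y', MemPK K μ → x' ∈ Set.Icc (-K) K → y' ∈ Set.Icc (-K) K →
      W1 μ m < η → |x' - x| < η → |y' - y| < η → |G μ x' y' - G m x y| < ε

end

/-- The set `D_n^K` of probability measures that are convex combinations of the Dirac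
masses `δ_{k/n}`, `-nK ≤ k ≤ nK`. -/
def DnK (n K : ℕ) : Set (Measure ℝ) :=
  {m | ∃ l : ℤ → ℝ, (∀ k, 0 ≤ l k) ∧
    (∑ k ∈ Finset.Icc (-(n * K : ℤ)) (n * K : ℤ), l k = 1) ∧
    m = ∑ k ∈ Finset.Icc (-(n * K : ℤ)) (n * K : ℤ),
      ENNReal.ofReal (l k) • Measure.dirac ((k : ℝ) / n)}

theorem simplex_step {ι : Type*} [Fintype ι] [DecidableEq ι]
    (Φ : (ι → ℝ) → ℝ) (g : ι → (ι → ℝ) → ℝ)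
    (hg : ∀ k, ContinuousOn (g k) (stdSimplex ℝ ι))
    (hD : ∀ δ > (0:ℝ), ∃ η > (0:ℝ), ∀ ε : ℝ, 0 < ε → ε < η → ε ≤ 1 → ∀ l ∈ stdSimplex ℝ ι,
      ∀ k, |(Φ ((1 - ε) • l + ε • Pi.single k 1) - Φ l) / ε - g k l| ≤ δ)
    (a c : ι → ℝ) (ha : a ∈ stdSimplex ℝ ι) (hc : c ∈ stdSimplex ℝ ι) (T : Finset ι) :
    HasDerivWithinAt (fun ε : ℝ => Φ ((1 + ε * ∑ k ∈ T, a k)⁻¹ •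
      (c + ε • ∑ k ∈ T, Pi.single k (a k)))) (∑ k ∈ T, a k * g k c) (Set.Ioi 0) 0 := by
  induction T using Finset.induction_on with
  | empty => simpa using hasDerivWithinAt_const (0:ℝ) (Set.Ioi (0:ℝ)) (Φ c)
  | insert k T hk ih =>
    set S := ∑ k ∈ T, a k with hS
    set v : ι → ℝ := ∑ k ∈ T, Pi.single k (a k) with hv
    have hS0 : 0 ≤ S := Finset.sum_nonneg fun i _ => ha.1 i
    have hak : 0 ≤ a k := ha.1 k
    have hv0 : ∀ i, 0 ≤ v i := by
      intro i
      rw [hv, Finset.sum_apply]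
      refine Finset.sum_nonneg fun j _ => ?_
      by_cases h : i = j
      · subst h; simpa using ha.1 i
      · simp [h]
    have hvS : ∑ i, v i = S := by
      simp only [hv, Finset.sum_apply, hS]
      rw [Finset.sum_comm]
      simp
    set p : ℝ → ι → ℝ := fun ε => (1 + ε * S)⁻¹ • (c + ε • v) with hp
    have hpm : ∀ ε, 0 ≤ ε → p ε ∈ stdSimplex ℝ ι := by
      intro ε hε
      have h1 : 0 < 1 + ε * S := by positivity
      refine ⟨fun i => ?_, ?_⟩
      · have := hc.1 i
        have := hv0 i
        simp only [hp, Pi.smul_apply, Pi.add_apply, smul_eq_mul]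
        positivity
      · simp only [hp, Pi.smul_apply, Pi.add_apply, smul_eq_mul]
        rw [← Finset.mul_sum, Finset.sum_add_distrib, ← Finset.mul_sum, hvS, hc.2]
        field_simp
    have hp0 : p 0 = c := by simp [hp]
    have hpc : Tendsto p (𝓝[>] 0) (𝓝[stdSimplex ℝ ι] c) := by
      refine tendsto_nhdsWithin_iff.2 ⟨?_, ?_⟩
      · have : ContinuousAt p 0 := by
          have h1 : (1 + (0:ℝ) * S) ≠ 0 := by simp
          simp only [hp]
          fun_prop (disch := assumption)
        have := this.tendsto
        rw [hp0] at this
        exact this.mono_left nhdsWithin_le_nhds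
      · filter_upwards [self_mem_nhdsWithin] with ε hε using hpm ε (le_of_lt hε)
    have hgp : Tendsto (fun ε => g k (p ε)) (𝓝[>] 0) (𝓝 (g k c)) :=
      (hg k c hc).tendsto.comp hpc
    set q : ℝ → ι → ℝ := fun ε => (1 + ε * ∑ k ∈ insert k T, a k)⁻¹ •
      (c + ε • ∑ k ∈ insert k T, Pi.single k (a k)) with hq
    set e : ℝ → ℝ := fun ε => ε * a k / (1 + ε * (a k + S)) with he
    have hqe : ∀ ε, 0 ≤ ε → q ε = (1 - e ε) • p ε + e ε • Pi.single k 1 := by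
      intro ε hε
      have h1 : 0 < 1 + ε * S := by positivity
      have h2 : 0 < 1 + ε * (a k + S) := by positivity
      have h3 : 0 < 1 + ε * S + ε * a k := by positivity
      simp only [hq, hp, he, Finset.sum_insert hk, ← hS, ← hv]
      ext i
      have h4 : (Pi.single k (a k) : ι → ℝ) i = a k * (Pi.single k 1 : ι → ℝ) i := by
        by_cases h : i = k
        · subst h; simp
        · simp [h]
      simp only [Pi.smul_apply, Pi.add_apply, smul_eq_mul, h4]
      field_simp
      ring
    have key : HasDerivWithinAt (fun ε => Φ (q ε) - Φ (p ε)) (a k * g k c) (Set.Ioi 0) 0 := by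
      rw [hasDerivWithinAt_iff_tendsto_slope' (by simp)]
      have hq0 : q 0 = p 0 := by simp [hq, hp]
      rcases hak.eq_or_lt with h0 | hpos
      · rw [← h0, zero_mul]
        refine tendsto_const_nhds.congr' ?_
        filter_upwards [self_mem_nhdsWithin] with ε hε
        rw [slope_def_field, hqe ε (le_of_lt hε), hq0]
        simp [he, ← h0]
      · have he0 : Tendsto e (𝓝[>] 0) (𝓝 0) := by
          have : ContinuousAt e 0 := by
            have h1 : (1 + (0:ℝ) * (a k + S)) ≠ 0 := by simp
            simp only [he]
            fun_prop (disch := assumption)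
          have := this.tendsto
          simp only [he, zero_mul, zero_div] at this
          exact this.mono_left nhdsWithin_le_nhds
        have hr : Tendsto (fun ε => a k / (1 + ε * (a k + S))) (𝓝[>] 0) (𝓝 (a k)) := by
          have : ContinuousAt (fun ε => a k / (1 + ε * (a k + S))) 0 := by
            have h1 : (1 + (0:ℝ) * (a k + S)) ≠ 0 := by simp
            fun_prop (disch := assumption)
          have := this.tendsto
          simp only [zero_mul, add_zero, div_one] at this
          exact this.mono_left nhdsWithin_le_nhds
        have hquot : Tendsto (fun ε => (Φ (q ε) - Φ (p ε)) / e ε - g k (p ε))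
            (𝓝[>] 0) (𝓝 0) := by
          rw [Metric.tendsto_nhds]
          intro δ hδ
          obtain ⟨η, hη, H⟩ := hD (δ / 2) (by positivity)
          filter_upwards [self_mem_nhdsWithin, he0.eventually (gt_mem_nhds hη),
            he0.eventually (gt_mem_nhds one_pos)] with ε hε h1 h2
          have hε' : 0 < ε := hε
          rw [hqe ε hε'.le, Real.dist_eq, sub_zero]
          have := H (e ε) (by simp only [he]; positivity) h1 h2.le (p ε) (hpm ε hε'.le) k
          linarith
        have h2 := (hquot.add hgp).mul hr
        rw [zero_add, mul_comm] at h2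
        refine h2.congr' ?_
        filter_upwards [self_mem_nhdsWithin] with ε hε
        have hε' : 0 < ε := hε
        have h3 : 0 < 1 + ε * (a k + S) := by positivity
        rw [slope_def_field, hq0]
        simp only [he, sub_zero, sub_self]
        field_simp
        ring
    have h5 := ih.add key
    have h6 : ∑ j ∈ insert k T, a j * g j c = ∑ j ∈ T, a j * g j c + a k * g k c := by
      rw [Finset.sum_insert hk, add_comm]
    rw [h6]
    refine h5.congr_of_eventuallyEq (Eventually.of_forall fun ε => ?_) ?_
    · change Φ (q ε) = Φ (p ε) + (Φ (q ε) - Φ (p ε))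
      ring
    · change Φ (q 0) = Φ (p 0) + (Φ (q 0) - Φ (p 0))
      ring

theorem simplex_ftc {ι : Type*} [Fintype ι] [DecidableEq ι]
    (Φ : (ι → ℝ) → ℝ) (g : ι → (ι → ℝ) → ℝ)
    (hΦ : ContinuousOn Φ (stdSimplex ℝ ι))
    (hg : ∀ k, ContinuousOn (g k) (stdSimplex ℝ ι))
    (hD : ∀ δ > (0:ℝ), ∃ η > (0:ℝ), ∀ ε : ℝ, 0 < ε → ε < η → ε ≤ 1 → ∀ l ∈ stdSimplex ℝ ι,
      ∀ k, |(Φ ((1 - ε) • l + ε • Pi.single k 1) - Φ l) / ε - g k l| ≤ δ)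
    (hz : ∀ l ∈ stdSimplex ℝ ι, ∑ k, l k * g k l = 0)
    (a b : ι → ℝ) (ha : a ∈ stdSimplex ℝ ι) (hb : b ∈ stdSimplex ℝ ι) :
    Φ a - Φ b = ∫ t in (0:ℝ)..1, (∑ k, a k * g k ((1 - t) • b + t • a) -
      ∑ k, b k * g k ((1 - t) • b + t • a)) := by
  set c : ℝ → ι → ℝ := fun t => (1 - t) • b + t • a with hc
  have hcm : ∀ t ∈ Set.Icc (0:ℝ) 1, c t ∈ stdSimplex ℝ ι := fun t ht =>
    convex_stdSimplex ℝ ι hb ha (by linarith [ht.2]) ht.1 (by ring)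
  have hcc : Continuous c := by fun_prop
  have hgc : ∀ k, ContinuousOn (fun t => g k (c t)) (Set.Icc 0 1) := fun k =>
    (hg k).comp hcc.continuousOn hcm
  have main := intervalIntegral.integral_eq_sub_of_hasDeriv_right_of_le (a := 0) (b := 1)
    (f := fun t => Φ (c t))
    (f' := fun t => (∑ k, a k * g k (c t) - ∑ k, b k * g k (c t))) zero_le_one
    (hΦ.comp hcc.continuousOn hcm) ?_ ?_
  · rw [main]; simp [hc]
  · intro t ht
    have hct := hcm t ⟨ht.1.le, ht.2.le⟩
    have h1 := simplex_step Φ g hg hD a (c t) ha hct Finset.univ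
    have hsum : ∑ k, Pi.single k (a k) = a := by
      ext i; simp [Finset.sum_apply]
    rw [ha.2, hsum] at h1
    have ht1 : 1 - t ≠ 0 := by linarith [ht.2]
    have hr : HasDerivAt (fun s : ℝ => (s - t) / (1 - s)) (1 / (1 - t)) t := by
      have := ((hasDerivAt_id t).sub_const t).div ((hasDerivAt_id t).const_sub 1) ht1
      refine this.congr_deriv ?_
      simp
      field_simp
    have hev : ∀ s ∈ Set.Ico t 1, Φ (c s) = Φ ((1 + (s - t) / (1 - s) * 1)⁻¹ •
        (c t + ((s - t) / (1 - s)) • a)) := by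
      intro s hs
      have hs1 : 0 < 1 - s := by linarith [hs.2]
      have ht2 : 0 < 1 - t := by linarith [ht.2]
      congr 1
      have : 1 + (s - t) / (1 - s) * 1 = (1 - t) / (1 - s) := by field_simp; ring
      rw [this]
      ext i
      simp only [hc, Pi.smul_apply, Pi.add_apply, smul_eq_mul]
      field_simp
      ring
    have h2 : HasDerivWithinAt (fun s => Φ ((1 + (s - t) / (1 - s) * 1)⁻¹ •
        (c t + ((s - t) / (1 - s)) • a))) ((∑ k, a k * g k (c t)) * (1 / (1 - t)))
        (Set.Ioo t 1) t := by
      refine HasDerivWithinAt.comp_of_eq (h := fun s : ℝ => (s - t) / (1 - s)) t h1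
        hr.hasDerivWithinAt ?_ (by simp)
      intro s hs
      exact div_pos (sub_pos.2 hs.1) (sub_pos.2 hs.2)
    have h3 : HasDerivWithinAt (fun s => Φ (c s)) ((∑ k, a k * g k (c t)) * (1 / (1 - t)))
        (Set.Ioo t 1) t :=
      h2.congr (fun s hs => hev s ⟨hs.1.le, hs.2⟩) (hev t ⟨le_rfl, ht.2⟩)
    have h4 : HasDerivWithinAt (fun s => Φ (c s)) ((∑ k, a k * g k (c t)) * (1 / (1 - t)))
        (Set.Ioi t) t := h3.mono_of_mem_nhdsWithin (Ioo_mem_nhdsGT ht.2)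
    refine h4.congr_deriv ?_
    have hz' := hz (c t) hct
    have : ∑ k, c t k * g k (c t) =
        (1 - t) * ∑ k, b k * g k (c t) + t * ∑ k, a k * g k (c t) := by
      rw [Finset.mul_sum, Finset.mul_sum, ← Finset.sum_add_distrib]
      refine Finset.sum_congr rfl fun k _ => ?_
      have : c t k = (1 - t) * b k + t * a k := by simp [hc]
      rw [this]; ring
    rw [this] at hz'
    field_simp
    linarith
  · apply ContinuousOn.intervalIntegrable
    rw [Set.uIcc_of_le zero_le_one]
    exact (continuousOn_finsetSum _ fun k _ => (hgc k).const_smul (a k)).sub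
      (continuousOn_finsetSum _ fun k _ => (hgc k).const_smul (b k))

noncomputable def atomM {ι : Type*} [Fintype ι] (x : ι → ℝ) (l : ι → ℝ) : Measure ℝ :=
  ∑ k, ENNReal.ofReal (l k) • Measure.dirac (x k)

theorem integral_sum_dirac {α ι : Type*} [MeasurableSpace α] [MeasurableSingletonClass α]
    (s : Finset ι) (x : ι → α) (l : ι → ℝ)
    (hl : ∀ k ∈ s, 0 ≤ l k) (f : α → ℝ) :
    ∫ y, f y ∂(∑ k ∈ s, ENNReal.ofReal (l k) • Measure.dirac (x k)) = ∑ k ∈ s, l k * f (x k) := by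
  rw [integral_finsetSum_measure]
  · refine Finset.sum_congr rfl fun k hk => ?_
    rw [integral_smul_measure, integral_dirac, ENNReal.toReal_ofReal (hl k hk), smul_eq_mul]
  · exact fun k _ => (integrable_dirac (by simp)).smul_measure (by simp)

theorem integral_atomM {ι : Type*} [Fintype ι] (x : ι → ℝ) (l : ι → ℝ)
    (hl : ∀ k, 0 ≤ l k) (f : ℝ → ℝ) :
    ∫ y, f y ∂(atomM x l) = ∑ k, l k * f (x k) :=
  integral_sum_dirac _ _ _ (fun k _ => hl k) f

theorem map_sum_dirac {α β ι : Type*} [MeasurableSpace α] [MeasurableSpace β]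
    (s : Finset ι) (x : ι → α) (l : ι → ENNReal) (f : α → β) (hf : Measurable f) :
    (∑ k ∈ s, l k • Measure.dirac (x k)).map f = ∑ k ∈ s, l k • Measure.dirac (f (x k)) := by
  rw [Measure.map_finset_sum hf.aemeasurable]
  refine Finset.sum_congr rfl fun k _ => ?_
  rw [Measure.map_smul, Measure.map_dirac' hf]

theorem W1_nonneg (m μ : Measure ℝ) : 0 ≤ W1 m μ := by
  refine Real.sInf_nonneg ?_
  rintro c ⟨π, -, rfl⟩
  exact integral_nonneg fun p => abs_nonneg _

theorem W1_atomM_le {ι : Type*} [Fintype ι] [DecidableEq ι] (x : ι → ℝ) (a b : ι → ℝ)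
    (ha : a ∈ stdSimplex ℝ ι) (hb : b ∈ stdSimplex ℝ ι) :
    W1 (atomM x a) (atomM x b) ≤ (∑ i, ∑ j, |x i - x j|) * ∑ k, |a k - b k| := by
  set c : ι → ℝ := fun i => min (a i) (b i) with hc
  set u : ι → ℝ := fun i => a i - c i with hu
  set v : ι → ℝ := fun i => b i - c i with hv
  set r : ℝ := ∑ i, u i with hr
  have hc0 : ∀ i, 0 ≤ c i := fun i => le_min (ha.1 i) (hb.1 i)
  have hu0 : ∀ i, 0 ≤ u i := fun i => sub_nonneg.2 (min_le_left _ _)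
  have hv0 : ∀ i, 0 ≤ v i := fun i => sub_nonneg.2 (min_le_right _ _)
  have hr0 : 0 ≤ r := Finset.sum_nonneg fun i _ => hu0 i
  have hvr : ∑ i, v i = r := by
    simp only [hr, hu, hv, Finset.sum_sub_distrib, ha.2, hb.2]
  have hur : ∀ i, u i ≤ r := fun i =>
    Finset.single_le_sum (f := u) (fun j _ => hu0 j) (Finset.mem_univ i)
  have hvr' : ∀ i, v i ≤ r := fun i =>
    hvr ▸ Finset.single_le_sum (f := v) (fun j _ => hv0 j) (Finset.mem_univ i)
  set w : ι × ι → ℝ := fun p => (if p.1 = p.2 then c p.1 else 0) + u p.1 * v p.2 / r with hw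
  have hw0 : ∀ p, 0 ≤ w p := by
    intro p
    have h1 : 0 ≤ u p.1 * v p.2 / r := div_nonneg (mul_nonneg (hu0 _) (hv0 _)) hr0
    have h2 : 0 ≤ (if p.1 = p.2 then c p.1 else 0) := by
      split_ifs
      · exact hc0 _
      · exact le_rfl
    exact add_nonneg h2 h1
  have hw1 : ∀ i, ∑ j, w (i, j) = a i := by
    intro i
    simp only [hw, Finset.sum_add_distrib]
    rw [← Finset.sum_div, ← Finset.mul_sum, hvr]
    rcases hr0.eq_or_lt with h | h
    · have : u i = 0 := le_antisymm (h ▸ hur i) (hu0 i)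
      have h3 : a i = c i := by simp only [hu] at this; linarith
      simp [this, h3]
    · rw [mul_div_cancel_right₀ _ h.ne']
      simp [hu]
  have hw2 : ∀ j, ∑ i, w (i, j) = b j := by
    intro j
    simp only [hw, Finset.sum_add_distrib]
    rw [← Finset.sum_div, ← Finset.sum_mul, ← hr]
    rcases hr0.eq_or_lt with h | h
    · have : v j = 0 := le_antisymm (h ▸ hvr' j) (hv0 j)
      have h3 : b j = c j := by simp only [hv] at this; linarith
      simp [this, h3]
    · rw [mul_div_cancel_left₀ _ h.ne']
      simp [hv]
  set π : Measure (ℝ × ℝ) := ∑ p : ι × ι, ENNReal.ofReal (w p) • Measure.dirac (x p.1, x p.2)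
    with hπ
  have hcoup : IsCoupling π (atomM x a) (atomM x b) := by
    constructor
    · rw [hπ, map_sum_dirac _ _ _ _ measurable_fst, Fintype.sum_prod_type, atomM]
      refine Finset.sum_congr rfl fun i _ => ?_
      rw [← hw1 i, ENNReal.ofReal_sum_of_nonneg fun j _ => hw0 _, Finset.sum_smul]
    · rw [hπ, map_sum_dirac _ _ _ _ measurable_snd, Fintype.sum_prod_type_right, atomM]
      refine Finset.sum_congr rfl fun i _ => ?_
      rw [← hw2 i, ENNReal.ofReal_sum_of_nonneg fun j _ => hw0 _, Finset.sum_smul]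
  have h1 : W1 (atomM x a) (atomM x b) ≤ ∫ p, |p.1 - p.2| ∂π := by
    refine csInf_le ⟨0, ?_⟩ ⟨π, hcoup, rfl⟩
    rintro c ⟨π, -, rfl⟩
    exact integral_nonneg fun p => abs_nonneg _
  refine h1.trans ?_
  rw [hπ, integral_sum_dirac _ _ _ (fun p _ => hw0 p), Fintype.sum_prod_type, Finset.sum_mul]
  refine Finset.sum_le_sum fun i _ => ?_
  rw [Finset.sum_mul]
  refine Finset.sum_le_sum fun j _ => ?_
  have hrle : r ≤ ∑ k, |a k - b k| := by
    refine Finset.sum_le_sum fun k _ => ?_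
    simp only [hu, hc]
    rcases le_total (a k) (b k) with h | h
    · simp [h]
    · simpa [h] using le_abs_self (a k - b k)
  by_cases hij : i = j
  · simp [hij]
  · have h2 : w (i, j) ≤ r := by
      simp only [hw, hij, if_false, zero_add]
      exact div_le_of_le_mul₀ hr0 hr0 (mul_le_mul (hur i) (hvr' j) (hv0 j) hr0)
    rw [mul_comm]
    exact mul_le_mul_of_nonneg_left (h2.trans hrle) (abs_nonneg _)

theorem W1_atomM_tendsto {ι : Type*} [Fintype ι] [DecidableEq ι] (x : ι → ℝ) (c : ι → ℝ)
    (hc : c ∈ stdSimplex ℝ ι) :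
    Tendsto (fun a => W1 (atomM x a) (atomM x c)) (𝓝[stdSimplex ℝ ι] c) (𝓝 0) := by
  have h : Tendsto (fun a : ι → ℝ => (∑ i, ∑ j, |x i - x j|) * ∑ k, |a k - c k|)
      (𝓝[stdSimplex ℝ ι] c) (𝓝 0) := by
    have h1 : Continuous (fun a : ι → ℝ => (∑ i, ∑ j, |x i - x j|) * ∑ k, |a k - c k|) := by
      fun_prop
    have h2 := h1.tendsto c
    simp only [sub_self, abs_zero, Finset.sum_const_zero, mul_zero] at h2
    exact h2.mono_left nhdsWithin_le_nhds
  refine tendsto_of_tendsto_of_tendsto_of_le_of_le' tendsto_const_nhds h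
    (Eventually.of_forall fun a => W1_nonneg _ _) ?_
  filter_upwards [self_mem_nhdsWithin] with a ha using W1_atomM_le x a c ha hc

theorem lineSeg_atomM {ι : Type*} [Fintype ι] (x : ι → ℝ) (a b : ι → ℝ)
    (ha : ∀ i, 0 ≤ a i) (hb : ∀ i, 0 ≤ b i) (t : ℝ) (h0 : 0 ≤ t) (h1 : t ≤ 1) :
    lineSeg (atomM x b) (atomM x a) t = atomM x ((1 - t) • b + t • a) := by
  have h2 : 0 ≤ 1 - t := by linarith
  simp only [lineSeg, atomM, Finset.smul_sum, ← Finset.sum_add_distrib]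
  refine Finset.sum_congr rfl fun k _ => ?_
  rw [smul_smul, smul_smul, ← add_smul, ← ENNReal.ofReal_mul h2, ← ENNReal.ofReal_mul h0,
    ← ENNReal.ofReal_add (mul_nonneg h2 (hb k)) (mul_nonneg h0 (ha k))]
  rfl

theorem atomM_single {ι : Type*} [Fintype ι] [DecidableEq ι] (x : ι → ℝ) (k : ι) :
    atomM x (Pi.single k 1) = Measure.dirac (x k) := by
  rw [atomM, Finset.sum_eq_single k]
  · simp
  · intro j _ hj
    simp [hj]
  · simp

theorem mem_DnK_iff (n K : ℕ) (m : Measure ℝ) :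
    m ∈ DnK n K ↔ ∃ l ∈ stdSimplex ℝ (Finset.Icc (-(n * K : ℤ)) (n * K : ℤ)),
      m = atomM (fun k : Finset.Icc (-(n * K : ℤ)) (n * K : ℤ) => ((k : ℤ) : ℝ) / n) l := by
  constructor
  · rintro ⟨l, h0, h1, rfl⟩
    refine ⟨fun k => l k, ⟨fun k => h0 k, ?_⟩, ?_⟩
    · rw [← h1]
      exact Finset.sum_coe_sort (Finset.Icc (-(n * K : ℤ)) (n * K : ℤ)) l
    · exact (Finset.sum_coe_sort (Finset.Icc (-(n * K : ℤ)) (n * K : ℤ))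
        fun k => ENNReal.ofReal (l k) • Measure.dirac ((k : ℝ) / n)).symm
  · rintro ⟨l, ⟨h0, h1⟩, rfl⟩
    refine ⟨fun k => if h : k ∈ Finset.Icc (-(n * K : ℤ)) (n * K : ℤ) then l ⟨k, h⟩ else 0,
      ?_, ?_, ?_⟩
    · intro k
      dsimp only
      split_ifs
      · exact h0 _
      · exact le_rfl
    · rw [← h1, ← Finset.sum_coe_sort (Finset.Icc (-(n * K : ℤ)) (n * K : ℤ))]
      refine Finset.sum_congr rfl fun k _ => ?_
      rw [dif_pos k.2]
    · rw [← Finset.sum_coe_sort (Finset.Icc (-(n * K : ℤ)) (n * K : ℤ))]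
      refine Finset.sum_congr rfl fun k _ => ?_
      dsimp only
      rw [dif_pos k.2]

/-- "differentiability" of `F` on the set of atomic measures `D_n^K`:
if `F` is Lipschitz and uniformly Dawson-differentiable on `D_n^K` with derivative `ΔF`
satisfying `∫ ΔF(m,·) dm = 0` and `C^{0,1}`-type regularity on `D_n^K`, then for all
`m, μ ∈ D_n^K`, `F(m) - F(μ) = ∫₀¹ ∫ ΔF((1-t)μ + t·m, x) d(m-μ)(x) dt`. -/
theorem stmt7 (n K : ℕ) (hn : 0 < n) (hK : 0 < K)
    (F : Measure ℝ → ℝ) (ΔF : Measure ℝ → ℝ → ℝ)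
    (hLip : ∃ L : ℝ, ∀ m ∈ DnK n K, ∀ μ ∈ DnK n K, |F m - F μ| ≤ L * W1 m μ)
    (hDawson : ∀ δ > (0:ℝ), ∃ η > (0:ℝ), ∀ ε : ℝ, 0 < ε → ε < η → ∀ m ∈ DnK n K,
      ∀ x ∈ Set.Icc (-(K : ℝ)) (K : ℝ),
        |(F (lineSeg m (Measure.dirac x) ε) - F m) / ε - ΔF m x| ≤ δ)
    (hzero : ∀ m ∈ DnK n K, ∫ x, ΔF m x ∂m = 0)
    (hC1x : ∀ m ∈ DnK n K, ContDiff ℝ 1 (ΔF m))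
    (hContm : ∀ x : ℝ, ∀ m ∈ DnK n K, ∀ ε > (0:ℝ), ∃ η > (0:ℝ), ∀ μ ∈ DnK n K,
      W1 μ m < η → |ΔF μ x - ΔF m x| < ε)
    (hJoint : ∀ m ∈ DnK n K, ∀ x : ℝ, ∀ ε > (0:ℝ), ∃ η > (0:ℝ),
      ∀ μ ∈ DnK n K, ∀ y : ℝ, W1 μ m < η → |y - x| < η →
        |deriv (ΔF μ) y - deriv (ΔF m) x| < ε) :
    ∀ m ∈ DnK n K, ∀ μ ∈ DnK n K,
      F m - F μ = ∫ t in (0:ℝ)..1, dInt (ΔF (lineSeg μ m t)) m μ := by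
  classical
  set x : Finset.Icc (-(n * K : ℤ)) (n * K : ℤ) → ℝ := fun k => ((k : ℤ) : ℝ) / n with hx
  have hmem : ∀ l ∈ stdSimplex ℝ (Finset.Icc (-(n * K : ℤ)) (n * K : ℤ)), atomM x l ∈ DnK n K :=
    fun l hl => (mem_DnK_iff n K _).2 ⟨l, hl, rfl⟩
  have hxK : ∀ k, x k ∈ Set.Icc (-(K : ℝ)) (K : ℝ) := by
    intro k
    have hk := Finset.mem_Icc.1 k.2
    have hn' : (0:ℝ) < n := by exact_mod_cast hn
    have h1 : (-(n * K : ℝ)) ≤ ((k : ℤ) : ℝ) := by exact_mod_cast hk.1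
    have h2 : ((k : ℤ) : ℝ) ≤ (n * K : ℝ) := by exact_mod_cast hk.2
    constructor
    · rw [hx, le_div_iff₀ hn']; linarith
    · rw [hx, div_le_iff₀ hn']; linarith
  intro m hm μ hμ
  obtain ⟨a, ha, rfl⟩ := (mem_DnK_iff n K _).1 hm
  obtain ⟨b, hb, rfl⟩ := (mem_DnK_iff n K _).1 hμ
  have main := simplex_ftc (fun l => F (atomM x l)) (fun k l => ΔF (atomM x l) (x k))
    ?_ ?_ ?_ ?_ a b ha hb
  · rw [main]
    refine intervalIntegral.integral_congr fun t ht => ?_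
    rw [Set.uIcc_of_le zero_le_one] at ht
    simp only [dInt]
    rw [lineSeg_atomM x a b ha.1 hb.1 t ht.1 ht.2]
    rw [integral_atomM _ _ ha.1, integral_atomM _ _ hb.1]
  · obtain ⟨L, hL⟩ := hLip
    intro c hc
    have h1 := (W1_atomM_tendsto x c hc).const_mul L
    rw [mul_zero] at h1
    rw [ContinuousWithinAt, tendsto_iff_dist_tendsto_zero]
    refine tendsto_of_tendsto_of_tendsto_of_le_of_le' tendsto_const_nhds h1
      (Eventually.of_forall fun a => dist_nonneg) ?_
    filter_upwards [self_mem_nhdsWithin] with l hl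
    exact hL _ (hmem l hl) _ (hmem c hc)
  · intro k c hc
    rw [ContinuousWithinAt, Metric.tendsto_nhds]
    intro ε hε
    obtain ⟨η, hη, H⟩ := hContm (x k) _ (hmem c hc) ε hε
    filter_upwards [self_mem_nhdsWithin,
      (W1_atomM_tendsto x c hc).eventually (gt_mem_nhds hη)] with l hl h
    exact H _ (hmem l hl) h
  · intro δ hδ
    obtain ⟨η, hη, H⟩ := hDawson δ hδ
    refine ⟨η, hη, fun ε h0 h1 h2 l hl k => ?_⟩
    have := H ε h0 h1 _ (hmem l hl) (x k) (hxK k)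
    rwa [← atomM_single x k, lineSeg_atomM x _ _ (single_mem_stdSimplex ℝ k).1 hl.1 ε h0.le h2]
      at this
  · intro l hl
    have := hzero _ (hmem l hl)
    rwa [integral_atomM _ _ hl.1] at this
end

section
/- Let G : P_1(ℝ)×ℝ → ℝ be of class C^{0,1}. Then the function Φ : P_1(ℝ)×P_1(ℝ) → ℝ defined by Φ(m,μ) := ∫_0^1 ∫_ℝ G((1−t)μ + t·m, x) d(m − μ)(x) dt is jointly continuous with respect to W_1. -/
open MeasureTheory Filter Topology

/-- The filter of `W₁`-neighbourhoods of `m` inside `P₁(ℝ)`. -/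
noncomputable def nW (m : Measure ℝ) : Filter (Measure ℝ) :=
  comap (fun μ => W1 μ m) (𝓝 0) ⊓ 𝓟 {μ | MemP1 μ}

instance nW_cg (m : Measure ℝ) : (nW m).IsCountablyGenerated := by
  unfold nW; infer_instance

theorem W1_le {m μ : Measure ℝ} {π : Measure (ℝ × ℝ)} (h : IsCoupling π m μ) :
    W1 m μ ≤ ∫ p, |p.1 - p.2| ∂π := by
  refine csInf_le ⟨0, ?_⟩ ⟨π, h, rfl⟩
  rintro c ⟨π, -, rfl⟩
  exact integral_nonneg fun _ => abs_nonneg _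

theorem W1_self (m : Measure ℝ) : W1 m m = 0 := by
  refine le_antisymm ?_ (W1_nonneg _ _)
  have h : IsCoupling (m.map fun x => (x, x)) m m := by
    constructor
    · rw [Measure.map_map measurable_fst (by fun_prop)]; exact Measure.map_id
    · rw [Measure.map_map measurable_snd (by fun_prop)]; exact Measure.map_id
  refine (W1_le h).trans ?_
  rw [integral_map (by fun_prop) (by fun_prop)]
  simp

theorem exists_coupling {m μ : Measure ℝ} (hm : MemP1 m) (hμ : MemP1 μ) {η : ℝ}
    (h : W1 m μ < η) : ∃ π, IsCoupling π m μ ∧ ∫ p, |p.1 - p.2| ∂π < η := by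
  have := hm.1
  have := hμ.1
  obtain ⟨c, ⟨π, hπ, rfl⟩, hc⟩ := exists_lt_of_csInf_lt (s := {c : ℝ | ∃ π : Measure (ℝ × ℝ),
      IsCoupling π m μ ∧ c = ∫ p, |p.1 - p.2| ∂π})
    ⟨_, m.prod μ, ⟨by simp, by simp⟩, rfl⟩ h
  exact ⟨π, hπ, hc⟩

theorem coupling_fst {m μ : Measure ℝ} {π : Measure (ℝ × ℝ)} (h : IsCoupling π m μ)
    {f : ℝ → ℝ} (hf : Continuous f) (hi : Integrable f m) :
    Integrable (fun p : ℝ × ℝ => f p.1) π ∧ ∫ p, f p.1 ∂π = ∫ x, f x ∂m := by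
  rw [← h.1] at hi ⊢
  refine ⟨(integrable_map_measure hf.aestronglyMeasurable measurable_fst.aemeasurable).1 hi, ?_⟩
  rw [integral_map measurable_fst.aemeasurable hf.aestronglyMeasurable]

theorem coupling_snd {m μ : Measure ℝ} {π : Measure (ℝ × ℝ)} (h : IsCoupling π m μ)
    {f : ℝ → ℝ} (hf : Measurable f) (hi : Integrable f μ) :
    Integrable (fun p : ℝ × ℝ => f p.2) π ∧ ∫ p, f p.2 ∂π = ∫ x, f x ∂μ := by
  rw [← h.2] at hi ⊢
  refine ⟨(integrable_map_measure hf.aestronglyMeasurable measurable_snd.aemeasurable).1 hi, ?_⟩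
  rw [integral_map measurable_snd.aemeasurable hf.aestronglyMeasurable]

theorem coupling_int {m μ : Measure ℝ} {π : Measure (ℝ × ℝ)} (hm : MemP1 m) (hμ : MemP1 μ)
    (h : IsCoupling π m μ) : Integrable (fun p : ℝ × ℝ => |p.1 - p.2|) π := by
  refine (((coupling_fst h continuous_abs hm.2).1).add
    (coupling_snd h continuous_abs.measurable hμ.2).1).mono' (by fun_prop) ?_
  refine ae_of_all _ fun p => ?_
  simpa using abs_sub p.1 p.2

theorem coupling_le {m μ : Measure ℝ} {π : Measure (ℝ × ℝ)} (hm : MemP1 m) (hμ : MemP1 μ)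
    (h : IsCoupling π m μ) :
    ∫ p, |p.1 - p.2| ∂π ≤ (∫ x, |x| ∂m) + ∫ x, |x| ∂μ := by
  have h1 := coupling_fst h continuous_abs hm.2
  have h2 := coupling_snd h continuous_abs.measurable hμ.2
  rw [← h1.2, ← h2.2, ← integral_add h1.1 h2.1]
  exact integral_mono (coupling_int hm hμ h) (h1.1.add h2.1) fun p => abs_sub p.1 p.2

theorem coupling_moment {m μ : Measure ℝ} {π : Measure (ℝ × ℝ)} (hm : MemP1 m) (hμ : MemP1 μ)
    (h : IsCoupling π m μ) :
    (∫ x, |x| ∂m) ≤ (∫ p, |p.1 - p.2| ∂π) + ∫ x, |x| ∂μ := by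
  have h1 := coupling_fst h continuous_abs hm.2
  have h2 := coupling_snd h continuous_abs.measurable hμ.2
  rw [← h1.2, ← h2.2, ← integral_add (coupling_int hm hμ h) h2.1]
  refine integral_mono h1.1 ((coupling_int hm hμ h).add h2.1) fun p => ?_
  have := abs_add_le (p.1 - p.2) p.2
  simpa using this

theorem memP1_lineSeg {m μ : Measure ℝ} (hm : MemP1 m) (hμ : MemP1 μ) {t : ℝ}
    (ht : t ∈ Set.Icc (0:ℝ) 1) : MemP1 (lineSeg μ m t) := by
  have := hm.1
  have := hμ.1
  refine ⟨⟨?_⟩, ?_⟩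
  · simp only [lineSeg, Measure.coe_add, Measure.coe_smul, Pi.add_apply, Pi.smul_apply,
      measure_univ, smul_eq_mul, mul_one]
    rw [← ENNReal.ofReal_add (by linarith [ht.2]) ht.1]
    simp
  · exact (hμ.2.smul_measure ENNReal.ofReal_ne_top).add_measure
      (hm.2.smul_measure ENNReal.ofReal_ne_top)

theorem lineSeg_symm (m μ : Measure ℝ) (t : ℝ) : lineSeg μ m t = lineSeg m μ (1 - t) := by
  simp [lineSeg, add_comm]

theorem W1_lineSeg_aux {m μ m' μ' : Measure ℝ} (hm : MemP1 m) (hμ : MemP1 μ) (hm' : MemP1 m')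
    (hμ' : MemP1 μ') {s t : ℝ} (hs : 0 ≤ s) (hst : s ≤ t) (ht : t ≤ 1)
    {π ρ : Measure (ℝ × ℝ)} (hπ : IsCoupling π m' m) (hρ : IsCoupling ρ μ' μ) :
    W1 (lineSeg μ' m' t) (lineSeg μ m s) ≤ (∫ p, |p.1 - p.2| ∂π) + (∫ p, |p.1 - p.2| ∂ρ) +
      (t - s) * ((∫ x, |x| ∂m') + ∫ x, |x| ∂μ) := by
  have := hm'.1
  have := hμ.1
  have hσ : IsCoupling (m'.prod μ) m' μ := ⟨by simp, by simp⟩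
  have hc : IsCoupling (ENNReal.ofReal (1 - t) • ρ + ENNReal.ofReal s • π +
      ENNReal.ofReal (t - s) • (m'.prod μ)) (lineSeg μ' m' t) (lineSeg μ m s) := by
    constructor
    · rw [Measure.map_add _ _ measurable_fst, Measure.map_add _ _ measurable_fst,
        Measure.map_smul, Measure.map_smul, Measure.map_smul, hρ.1, hπ.1, hσ.1, lineSeg, add_assoc,
        ← add_smul, ← ENNReal.ofReal_add hs (by linarith)]
      congr 3; ring
    · rw [Measure.map_add _ _ measurable_snd, Measure.map_add _ _ measurable_snd,
        Measure.map_smul, Measure.map_smul, Measure.map_smul, hρ.2, hπ.2, hσ.2, lineSeg,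
        add_right_comm, ← add_smul, ← ENNReal.ofReal_add (by linarith) (by linarith)]
      congr 3; ring
  refine (W1_le hc).trans ?_
  have i1 := coupling_int hμ' hμ hρ
  have i2 := coupling_int hm' hm hπ
  have i3 := coupling_int hm' hμ hσ
  have j1 := i1.smul_measure (c := ENNReal.ofReal (1 - t)) ENNReal.ofReal_ne_top
  have j2 := i2.smul_measure (c := ENNReal.ofReal s) ENNReal.ofReal_ne_top
  have j3 := i3.smul_measure (c := ENNReal.ofReal (t - s)) ENNReal.ofReal_ne_top
  rw [integral_add_measure (j1.add_measure j2) j3, integral_add_measure j1 j2,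
    integral_smul_measure, integral_smul_measure, integral_smul_measure,
    ENNReal.toReal_ofReal (by linarith), ENNReal.toReal_ofReal (by linarith),
    ENNReal.toReal_ofReal (by linarith)]
  simp only [smul_eq_mul]
  have k1 : 0 ≤ ∫ p, |p.1 - p.2| ∂π := integral_nonneg fun _ => abs_nonneg _
  have k2 : 0 ≤ ∫ p, |p.1 - p.2| ∂ρ := integral_nonneg fun _ => abs_nonneg _
  have k3 := mul_le_mul_of_nonneg_left (coupling_le hm' hμ hσ) (sub_nonneg.2 hst)
  nlinarith

theorem W1_lineSeg {m μ m' μ' : Measure ℝ} (hm : MemP1 m) (hμ : MemP1 μ) (hm' : MemP1 m')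
    (hμ' : MemP1 μ') {s t : ℝ} (hs : s ∈ Set.Icc (0:ℝ) 1) (ht : t ∈ Set.Icc (0:ℝ) 1) :
    W1 (lineSeg μ' m' t) (lineSeg μ m s) ≤ W1 m' m + W1 μ' μ +
      |t - s| * ((∫ x, |x| ∂m) + (∫ x, |x| ∂μ) + W1 m' m + W1 μ' μ) := by
  have key : ∀ π ρ, IsCoupling π m' m → IsCoupling ρ μ' μ →
    W1 (lineSeg μ' m' t) (lineSeg μ m s) ≤ (∫ p, |p.1 - p.2| ∂π) + (∫ p, |p.1 - p.2| ∂ρ) +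
      |t - s| * ((∫ x, |x| ∂m) + (∫ x, |x| ∂μ) + (∫ p, |p.1 - p.2| ∂π) +
        (∫ p, |p.1 - p.2| ∂ρ)) := by
    intro π ρ hπ hρ
    have k1 : 0 ≤ ∫ p, |p.1 - p.2| ∂π := integral_nonneg fun _ => abs_nonneg _
    have k2 : 0 ≤ ∫ p, |p.1 - p.2| ∂ρ := integral_nonneg fun _ => abs_nonneg _
    have l1 := coupling_moment hm' hm hπ
    have l2 := coupling_moment hμ' hμ hρ
    rcases le_total s t with h | h
    · refine (W1_lineSeg_aux hm hμ hm' hμ' hs.1 h ht.2 hπ hρ).trans ?_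
      rw [abs_of_nonneg (sub_nonneg.2 h)]
      have := sub_nonneg.2 h
      gcongr ?_ + _ * ?_ <;> linarith
    · rw [lineSeg_symm m', lineSeg_symm m]
      refine (W1_lineSeg_aux hμ hm hμ' hm' (by linarith [ht.1, hs.2]) (by linarith)
        (by linarith [ht.1]) hρ hπ).trans ?_
      have := sub_nonneg.2 h
      rw [abs_sub_comm, abs_of_nonneg (sub_nonneg.2 h)]
      have e : 1 - t - (1 - s) = s - t := by ring
      rw [e, add_comm (∫ p, |p.1 - p.2| ∂ρ)]
      gcongr ?_ + _ * ?_ <;> linarith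
  have hlim : Tendsto (fun δ : ℝ => (W1 m' m + δ) + (W1 μ' μ + δ) +
      |t - s| * ((∫ x, |x| ∂m) + (∫ x, |x| ∂μ) + (W1 m' m + δ) + (W1 μ' μ + δ))) (𝓝[>] 0)
      (𝓝 ((W1 m' m + 0) + (W1 μ' μ + 0) +
      |t - s| * ((∫ x, |x| ∂m) + (∫ x, |x| ∂μ) + (W1 m' m + 0) + (W1 μ' μ + 0)))) := by
    refine Tendsto.mono_left (Continuous.tendsto (by fun_prop) _) nhdsWithin_le_nhds
  simp only [add_zero] at hlim
  refine ge_of_tendsto hlim ?_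
  filter_upwards [self_mem_nhdsWithin] with δ hδ
  obtain ⟨π, hπ, h1⟩ := exists_coupling hm' hm (lt_add_of_pos_right (W1 m' m) hδ)
  obtain ⟨ρ, hρ, h2⟩ := exists_coupling hμ' hμ (lt_add_of_pos_right (W1 μ' μ) hδ)
  refine (key π ρ hπ hρ).trans ?_
  gcongr

theorem nW_mem (m : Measure ℝ) : ∀ᶠ μ in nW m, MemP1 μ :=
  mem_inf_of_right (mem_principal_self _)

theorem nW_tendsto (m : Measure ℝ) : Tendsto (fun μ => W1 μ m) (nW m) (𝓝 0) :=
  tendsto_comap.mono_left inf_le_left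

theorem nW_lt (m : Measure ℝ) {η : ℝ} (h : 0 < η) : ∀ᶠ μ in nW m, W1 μ m < η :=
  (nW_tendsto m).eventually (gt_mem_nhds h)

theorem tendsto_nW {α : Type*} {l : Filter α} {f : α → Measure ℝ} {m : Measure ℝ}
    (h : Tendsto (fun a => W1 (f a) m) l (𝓝 0)) (h' : ∀ᶠ a in l, MemP1 (f a)) :
    Tendsto f l (nW m) :=
  tendsto_inf.2 ⟨tendsto_comap_iff.2 h, tendsto_principal.2 h'⟩

theorem nW_exists {m : Measure ℝ} {p : Measure ℝ → Prop} (h : ∀ᶠ μ in nW m, p μ) :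
    ∃ η > 0, ∀ μ, MemP1 μ → W1 μ m < η → p μ := by
  have h1 := eventually_inf_principal.1 h
  obtain ⟨η, hη, hh⟩ := (Metric.nhds_basis_ball.comap _).eventually_iff.1 h1
  refine ⟨η, hη, fun μ hμ hW => hh ?_ hμ⟩
  simp [abs_of_nonneg (W1_nonneg _ _), hW]

theorem pure_le_nW {m : Measure ℝ} (hm : MemP1 m) : pure m ≤ nW m := by
  have : Tendsto id (pure m) (nW m) := by
    refine tendsto_nW ?_ (by simpa using hm)
    refine tendsto_pure_left.2 fun s hs => ?_
    simpa [W1_self] using mem_of_mem_nhds hs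
  exact this

theorem tendsto_lineSeg {m μ : Measure ℝ} (hm : MemP1 m) (hμ : MemP1 μ) {t : ℝ}
    (ht : t ∈ Set.Icc (0:ℝ) 1) :
    Tendsto (fun p : (Measure ℝ × Measure ℝ) × ℝ => lineSeg p.1.2 p.1.1 p.2)
      ((nW m ×ˢ nW μ) ×ˢ 𝓝[Set.Icc 0 1] t) (nW (lineSeg μ m t)) := by
  have e1 : ∀ᶠ p in ((nW m ×ˢ nW μ) ×ˢ 𝓝[Set.Icc 0 1] t), MemP1 p.1.1 :=
    (tendsto_fst.comp tendsto_fst).eventually (nW_mem m)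
  have e2 : ∀ᶠ p in ((nW m ×ˢ nW μ) ×ˢ 𝓝[Set.Icc 0 1] t), MemP1 p.1.2 :=
    (tendsto_snd.comp tendsto_fst).eventually (nW_mem μ)
  have e3 : ∀ᶠ p in ((nW m ×ˢ nW μ) ×ˢ 𝓝[Set.Icc 0 1] t), p.2 ∈ Set.Icc (0:ℝ) 1 :=
    tendsto_snd.eventually self_mem_nhdsWithin
  have l1 : Tendsto (fun p : (Measure ℝ × Measure ℝ) × ℝ => W1 p.1.1 m)
      ((nW m ×ˢ nW μ) ×ˢ 𝓝[Set.Icc 0 1] t) (𝓝 0) :=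
    (nW_tendsto m).comp (tendsto_fst.comp tendsto_fst)
  have l2 : Tendsto (fun p : (Measure ℝ × Measure ℝ) × ℝ => W1 p.1.2 μ)
      ((nW m ×ˢ nW μ) ×ˢ 𝓝[Set.Icc 0 1] t) (𝓝 0) :=
    (nW_tendsto μ).comp (tendsto_snd.comp tendsto_fst)
  have l3 : Tendsto (fun p : (Measure ℝ × Measure ℝ) × ℝ => |p.2 - t|)
      ((nW m ×ˢ nW μ) ×ˢ 𝓝[Set.Icc 0 1] t) (𝓝 0) := by
    have : Tendsto (fun s : ℝ => |s - t|) (𝓝[Set.Icc 0 1] t) (𝓝 |t - t|) :=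
      Tendsto.mono_left (Continuous.tendsto (by fun_prop) _) nhdsWithin_le_nhds
    simp only [sub_self, abs_zero] at this
    exact this.comp tendsto_snd
  refine tendsto_nW ?_ ?_
  · have hl := (l1.add l2).add (l3.mul ((l1.const_add ((∫ x, |x| ∂m) + (∫ x, |x| ∂μ))).add l2))
    simp only [add_zero, zero_mul] at hl
    refine squeeze_zero' (Eventually.of_forall fun _ => W1_nonneg _ _) ?_ hl
    filter_upwards [e1, e2, e3] with p h1 h2 h3
    exact W1_lineSeg hm hμ h1 h2 ht h3
  · filter_upwards [e1, e2, e3] with p h1 h2 h3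
    exact memP1_lineSeg h1 h2 h3

theorem compact_seq {ν : Measure ℝ} (hν : MemP1 ν) {v : ℕ → Measure ℝ} (hv : ∀ n, MemP1 (v n))
    (h : Tendsto (fun n => W1 (v n) ν) atTop (𝓝 0)) : W1Compact (insert ν (Set.range v)) := by
  refine ⟨?_, ?_⟩
  · rintro m (rfl | ⟨n, rfl⟩)
    exacts [hν, hv n]
  · intro u hu
    by_cases hx : ∃ x ∈ insert ν (Set.range v), ∃ᶠ j in atTop, u j = x
    · obtain ⟨x, hx, hf⟩ := hx
      obtain ⟨φ, hφ, hφ'⟩ := extraction_of_frequently_atTop hf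
      exact ⟨x, hx, φ, hφ, by simp [hφ', W1_self]⟩
    · push Not at hx
      refine ⟨ν, Set.mem_insert _ _, id, strictMono_id, ?_⟩
      refine tendsto_order.2 ⟨fun a ha => Eventually.of_forall fun n => ha.trans_le (W1_nonneg _ _),
        fun a ha => ?_⟩
      obtain ⟨N, hN⟩ := eventually_atTop.1 (h.eventually (gt_mem_nhds ha))
      have : ∀ᶠ j in atTop, ∀ i ∈ Set.Iio N, u j ≠ v i :=
        (Set.finite_Iio N).eventually_all.2 fun i _ => hx _ (Or.inr ⟨i, rfl⟩)
      filter_upwards [this] with j hj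
      rcases hu j with h0 | ⟨n, hn⟩
      · simpa [h0, W1_self] using ha
      · have : N ≤ n := by
          by_contra hc
          exact hj n (not_le.1 hc) hn.symm
        simpa [hn] using hN n this

theorem unif_of_joint {α : Type*} {l : Filter α} {K : Set ℝ} (hK : IsCompact K)
    {F : α → ℝ → ℝ} {f : ℝ → ℝ} (hf : ContinuousOn f K)
    (h : ∀ x ∈ K, Tendsto (fun p : α × ℝ => F p.1 p.2) (l ×ˢ 𝓝[K] x) (𝓝 (f x)))
    {ε : ℝ} (hε : 0 < ε) : ∀ᶠ a in l, ∀ x ∈ K, |F a x - f x| < ε := by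
  have h1 : TendstoLocallyUniformlyOn F f l K := by
    rw [tendstoLocallyUniformlyOn_iff_forall_tendsto]
    intro x hx
    have h2 : Tendsto (fun p : α × ℝ => f p.2) (l ×ˢ 𝓝[K] x) (𝓝 (f x)) :=
      (hf x hx).tendsto.comp tendsto_snd
    exact (h2.prodMk_nhds (h x hx)).mono_right (nhds_le_uniformity _)
  have h2 := (tendstoLocallyUniformlyOn_iff_tendstoUniformlyOn_of_compact hK).1 h1
  filter_upwards [Metric.tendstoUniformlyOn_iff.1 h2 ε hε] with a ha x hx
  have := ha x hx
  rwa [dist_comm, Real.dist_eq] at this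

theorem deriv_bound {G : Measure ℝ → ℝ → ℝ} (hG : IsC01 G) {ν : Measure ℝ} (hν : MemP1 ν)
    (R : ℝ) : ∃ L ≥ 0, ∀ᶠ ν' in nW ν, ∀ x ∈ Set.Icc (-R) R, |deriv (G ν') x| ≤ L := by
  have hc : Continuous (deriv (G ν)) := (hG.1 ν hν).continuous_deriv le_rfl
  obtain ⟨L, hL⟩ := (isCompact_Icc (a := -R) (b := R)).exists_bound_of_continuousOn hc.continuousOn
  refine ⟨|L| + 1, by positivity, ?_⟩
  have := unif_of_joint (l := nW ν) (F := fun ν' x => deriv (G ν') x)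
    (isCompact_Icc (a := -R) (b := R)) hc.continuousOn ?_ one_pos
  · filter_upwards [this] with ν' h x hx
    have h1 := h x hx
    have h2 := hL x hx
    rw [Real.norm_eq_abs] at h2
    have h3 := abs_add_le (deriv (G ν') x - deriv (G ν) x) (deriv (G ν) x)
    rw [sub_add_cancel] at h3
    linarith [le_abs_self L]
  · intro x hx
    rw [Metric.tendsto_nhds]
    intro ε hε
    obtain ⟨η, hη, h⟩ := hG.2.2.2 ν x hν ε hε
    have e1 : ∀ᶠ y in 𝓝[Set.Icc (-R) R] x, |y - x| < η :=
      nhdsWithin_le_nhds (Metric.ball_mem_nhds x hη)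
    filter_upwards [((nW_mem ν).and (nW_lt ν hη)).prod_mk e1] with p hp
    exact h _ _ hp.1.1 hp.1.2 hp.2

theorem tail_small {ρ : Measure ℝ} (hρ : MemP1 ρ) {ε : ℝ} (hε : 0 < ε) :
    ∃ R ≥ 1, ∫ x, {x : ℝ | R < |x|}.indicator (fun x => 2 + 2 * |x|) x ∂ρ < ε := by
  have := hρ.1
  have hi : Integrable (fun x : ℝ => 2 + 2 * |x|) ρ :=
    (integrable_const _).add (hρ.2.const_mul 2)
  have h : Tendsto (fun R : ℝ => ∫ x, {x : ℝ | R < |x|}.indicator (fun x => 2 + 2 * |x|) x ∂ρ)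
      atTop (𝓝 (∫ x, (0:ℝ) ∂ρ)) := by
    refine tendsto_integral_filter_of_dominated_convergence (fun x => 2 + 2 * |x|) ?_ ?_ hi ?_
    · refine Eventually.of_forall fun R => ?_
      exact (hi.indicator (measurableSet_lt measurable_const (by fun_prop))).aestronglyMeasurable
    · refine Eventually.of_forall fun R => ae_of_all _ fun x => ?_
      refine (norm_indicator_le_norm_self _ _).trans ?_
      rw [Real.norm_eq_abs, abs_of_nonneg (by positivity)]
    · refine ae_of_all _ fun x => ?_
      refine tendsto_const_nhds.congr' ?_
      filter_upwards [eventually_ge_atTop |x|] with R hR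
      rw [Set.indicator_of_notMem]
      simpa using hR
  rw [integral_zero] at h
  obtain ⟨R, h1, h2⟩ := ((h.eventually (gt_mem_nhds hε)).and (eventually_ge_atTop 1)).exists
  exact ⟨R, h2, h1⟩

theorem ptwise {g : ℝ → ℝ} {C L R : ℝ} (hR : 1 ≤ R) (hL : 0 ≤ L) (hC : 0 ≤ C)
    (hg : Differentiable ℝ g)
    (hb : ∀ x, |g x| ≤ C * (1 + |x|))
    (hd : ∀ x ∈ Set.Icc (-(2 * R)) (2 * R), |deriv g x| ≤ L) (x y : ℝ) :
    |g x - g y| ≤ (L + 5 * C) * |x - y| +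
      C * {x : ℝ | R < |x|}.indicator (fun x => 2 + 2 * |x|) y := by
  have h0 : |g x - g y| ≤ C * (2 + |x| + |y|) := by
    have := abs_sub (g x) (g y)
    linarith [hb x, hb y]
  have h1 : |x| ≤ |x - y| + |y| := by
    have := abs_add_le (x - y) y
    simpa using this
  have hn := abs_nonneg (x - y)
  by_cases hy : R < |y|
  · rw [Set.indicator_of_mem (by exact hy)]
    have : C * |x| ≤ C * (|x - y| + |y|) := by gcongr
    nlinarith [mul_nonneg hL hn, mul_nonneg hC hn]
  · rw [Set.indicator_of_notMem (by exact hy)]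
    push Not at hy
    by_cases hx : |x| ≤ 2 * R
    · have := (convex_Icc (-(2 * R)) (2 * R)).norm_image_sub_le_of_norm_deriv_le (f := g) (C := L)
        (fun z _ => hg z) (fun z hz => hd z hz) (x := y) (y := x)
        (abs_le.1 (by linarith)) (abs_le.1 hx)
      simp only [Real.norm_eq_abs] at this
      nlinarith [mul_nonneg hC hn]
    · push Not at hx
      have : C * (2 + |x| + |y|) ≤ C * (5 * |x - y|) := by gcongr; linarith
      nlinarith [mul_nonneg hL hn]

theorem lemA_seq {G : Measure ℝ → ℝ → ℝ} (hG : IsC01 G) {ν ρ : Measure ℝ} (hν : MemP1 ν)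
    (hρ : MemP1 ρ) {v r : ℕ → Measure ℝ} (hv : ∀ n, MemP1 (v n)) (hr : ∀ n, MemP1 (r n))
    (tv : Tendsto v atTop (nW ν)) (tr : Tendsto r atTop (nW ρ)) :
    Tendsto (fun n => ∫ x, G (v n) x ∂(r n)) atTop (𝓝 (∫ x, G ν x ∂ρ)) := by
  have := hρ.1
  obtain ⟨C, hC, hb⟩ := hG.2.2.1 _ (compact_seq hν hv ((nW_tendsto ν).comp tv))
  have hbv : ∀ n x, |G (v n) x| ≤ C * (1 + |x|) := fun n => hb _ (Or.inr ⟨n, rfl⟩)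
  have hcv : ∀ n, Continuous (G (v n)) := fun n => (hG.1 _ (hv n)).continuous
  have hint : ∀ n (σ : Measure ℝ), MemP1 σ → Integrable (G (v n)) σ := by
    intro n σ hσ
    have := hσ.1
    refine (((integrable_const (1:ℝ)).add hσ.2).const_mul C).mono' (hcv n).aestronglyMeasurable ?_
    exact ae_of_all _ (hbv n)
  have t2 : Tendsto (fun n => ∫ x, G (v n) x ∂ρ) atTop (𝓝 (∫ x, G ν x ∂ρ)) := by
    refine tendsto_integral_of_dominated_convergence (fun x => C * (1 + |x|))
      (fun n => (hcv n).aestronglyMeasurable) (((integrable_const (1:ℝ)).add hρ.2).const_mul C)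
      (fun n => ae_of_all _ (hbv n)) (ae_of_all _ fun x => ?_)
    rw [Metric.tendsto_nhds]
    intro ε hε
    obtain ⟨η, hη, h⟩ := hG.2.1 x ν hν ε hε
    filter_upwards [tv.eventually (nW_lt ν hη)] with n hn
    exact h _ (hv n) hn
  have t1 : Tendsto (fun n => (∫ x, G (v n) x ∂(r n)) - ∫ x, G (v n) x ∂ρ) atTop (𝓝 0) := by
    rw [Metric.tendsto_nhds]
    intro ε hε
    obtain ⟨R, hR, htail⟩ := tail_small hρ (ε := ε / (2 * C)) (by positivity)
    obtain ⟨L, hL, hd⟩ := deriv_bound hG hν (2 * R)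
    have hη : 0 < ε / (2 * (L + 5 * C)) := by positivity
    filter_upwards [tv.eventually hd, tr.eventually (nW_lt ρ hη)] with n hn hn'
    obtain ⟨π, hπ, hcost⟩ := exists_coupling (hr n) hρ hn'
    have c1 := coupling_fst hπ (hcv n) (hint n _ (hr n))
    have c2 := coupling_snd hπ (hcv n).measurable (hint n _ hρ)
    have hi : Integrable ({x : ℝ | R < |x|}.indicator (fun x => 2 + 2 * |x|)) ρ :=
      ((integrable_const _).add (hρ.2.const_mul 2)).indicator
        (measurableSet_lt measurable_const (by fun_prop))
    have c3 := coupling_snd hπ (Measurable.indicator (by fun_prop)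
        (measurableSet_lt measurable_const (by fun_prop))) hi
    have c4 := coupling_int (hr n) hρ hπ
    rw [Real.dist_eq, sub_zero, ← c1.2, ← c2.2, ← integral_sub c1.1 c2.1]
    refine (abs_integral_le_integral_abs).trans_lt ?_
    refine (integral_mono (c1.1.sub c2.1).abs ((c4.const_mul (L + 5 * C)).add (c3.1.const_mul C))
      fun p => ptwise hR hL hC.le ((hG.1 _ (hv n)).differentiable one_ne_zero) (hbv n) hn
        p.1 p.2).trans_lt ?_
    rw [integral_add' (c4.const_mul (L + 5 * C)) (c3.1.const_mul C), integral_const_mul,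
      integral_const_mul, c3.2]
    rw [lt_div_iff₀ (by positivity)] at hcost htail
    nlinarith
  have := t1.add t2
  simpa using this

theorem lemA {G : Measure ℝ → ℝ → ℝ} (hG : IsC01 G) {ν ρ : Measure ℝ} (hν : MemP1 ν)
    (hρ : MemP1 ρ) : Tendsto (fun p : Measure ℝ × Measure ℝ => ∫ x, G p.1 x ∂p.2)
      (nW ν ×ˢ nW ρ) (𝓝 (∫ x, G ν x ∂ρ)) := by
  refine tendsto_of_seq_tendsto fun u hu => ?_
  have tv : Tendsto (fun n => (u n).1) atTop (nW ν) := tendsto_fst.comp hu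
  have tr : Tendsto (fun n => (u n).2) atTop (nW ρ) := tendsto_snd.comp hu
  obtain ⟨N, hN⟩ := eventually_atTop.1
    ((tv.eventually (nW_mem ν)).and (tr.eventually (nW_mem ρ)))
  have hs := tendsto_add_atTop_nat N
  have := lemA_seq hG hν hρ (v := fun n => (u (n + N)).1) (r := fun n => (u (n + N)).2)
    (fun n => (hN _ (by omega)).1) (fun n => (hN _ (by omega)).2)
    (tv.comp hs) (tr.comp hs)
  exact (tendsto_add_atTop_iff_nat N).1 this

theorem joint_f {G : Measure ℝ → ℝ → ℝ} (hG : IsC01 G) {m μ : Measure ℝ} (hm : MemP1 m)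
    (hμ : MemP1 μ) {t : ℝ} (ht : t ∈ Set.Icc (0:ℝ) 1) :
    Tendsto (fun p : (Measure ℝ × Measure ℝ) × ℝ =>
        dInt (G (lineSeg p.1.2 p.1.1 p.2)) p.1.1 p.1.2)
      ((nW m ×ˢ nW μ) ×ˢ 𝓝[Set.Icc 0 1] t) (𝓝 (dInt (G (lineSeg μ m t)) m μ)) := by
  have hl := tendsto_lineSeg hm hμ ht
  have hP := memP1_lineSeg hm hμ ht
  exact ((lemA hG hP hm).comp (hl.prodMk (tendsto_fst.comp tendsto_fst))).sub
    ((lemA hG hP hμ).comp (hl.prodMk (tendsto_snd.comp tendsto_fst)))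

theorem cont_f {G : Measure ℝ → ℝ → ℝ} (hG : IsC01 G) {m μ : Measure ℝ} (hm : MemP1 m)
    (hμ : MemP1 μ) : ContinuousOn (fun t => dInt (G (lineSeg μ m t)) m μ) (Set.Icc 0 1) := by
  intro t ht
  have h1 : Tendsto (fun s : ℝ => ((m, μ), s)) (𝓝[Set.Icc 0 1] t)
      ((nW m ×ˢ nW μ) ×ˢ 𝓝[Set.Icc 0 1] t) := by
    refine Tendsto.prodMk (tendsto_const_pure.mono_right ?_) tendsto_id
    rw [← prod_pure_pure]
    exact prod_mono (pure_le_nW hm) (pure_le_nW hμ)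
  exact (joint_f hG hm hμ ht).comp h1

/-- Lemma on joint continuity of `Φ`: for `G` of class `C^{0,1}`, the
function `Φ(m,μ) = ∫₀¹ ∫ G((1-t)μ + t·m, x) d(m-μ)(x) dt` is jointly `W₁`-continuous. -/
theorem stmt8 (G : Measure ℝ → ℝ → ℝ) (hG : IsC01 G) :
    ∀ m μ, MemP1 m → MemP1 μ → ∀ ε > 0, ∃ η > 0,
      ∀ m' μ', MemP1 m' → MemP1 μ' → W1 m' m < η → W1 μ' μ < η →
        |(∫ t in (0:ℝ)..1, dInt (G (lineSeg μ' m' t)) m' μ') -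
          ∫ t in (0:ℝ)..1, dInt (G (lineSeg μ m t)) m μ| < ε := by
  intro m μ hm hμ ε hε
  have hu := unif_of_joint (l := nW m ×ˢ nW μ)
    (F := fun p t => dInt (G (lineSeg p.2 p.1 t)) p.1 p.2) isCompact_Icc (cont_f hG hm hμ)
    (fun t ht => joint_f hG hm hμ ht) (half_pos hε)
  obtain ⟨pa, ha, pb, hb, hab⟩ := eventually_prod_iff.1 hu
  obtain ⟨η₁, h1, H1⟩ := nW_exists ha
  obtain ⟨η₂, h2, H2⟩ := nW_exists hb
  refine ⟨min η₁ η₂, lt_min h1 h2, fun m' μ' hm' hμ' w1 w2 => ?_⟩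
  have key := hab (H1 m' hm' (w1.trans_le (min_le_left _ _)))
    (H2 μ' hμ' (w2.trans_le (min_le_right _ _)))
  rw [← intervalIntegral.integral_sub
    (ContinuousOn.intervalIntegrable_of_Icc zero_le_one (cont_f hG hm' hμ'))
    (ContinuousOn.intervalIntegrable_of_Icc zero_le_one (cont_f hG hm hμ))]
  have := intervalIntegral.norm_integral_le_of_norm_le_const (a := 0) (b := 1) (C := ε / 2)
    (f := fun t => dInt (G (lineSeg μ' m' t)) m' μ' - dInt (G (lineSeg μ m t)) m μ) (fun t ht => by
      rw [Set.uIoc_of_le zero_le_one] at ht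
      exact (key t ⟨ht.1.le, ht.2⟩).le)
  rw [Real.norm_eq_abs] at this
  norm_num at this
  linarith
end

section
/- Let F : P_1(ℝ) → ℝ be of class C^2. Then for every m ∈ P_1(ℝ) and all x, y ∈ ℝ: δ²F(m,x,y) − δF(m,x) = δ²F(m,y,x) − δF(m,y). -/
open MeasureTheory Filter Topology

/-- `F : P₁(ℝ) → ℝ` is of class `C²`, with canonical derivative `δF` and canonical second
derivative `δ²F(m,x,y) = δ(δF_x)(m,y)`. -/
def IsC2 (F : Measure ℝ → ℝ) (δF : Measure ℝ → ℝ → ℝ)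
    (δ2F : Measure ℝ → ℝ → ℝ → ℝ) : Prop :=
  IsCanonicalDeriv F δF ∧
  (∀ x : ℝ, IsCanonicalDeriv (fun m => δF m x) (fun m y => δ2F m x y)) ∧
  (∀ m, MemP1 m → W1ContinuousAt F m) ∧
  (∀ x : ℝ, ∀ m, MemP1 m → W1ContinuousAt (fun μ => δF μ x) m) ∧
  (∀ x y : ℝ, ∀ m, MemP1 m → W1ContinuousAt (fun μ => δ2F μ x y) m) ∧
  (∀ m, MemP1 m → ContDiff ℝ 1 (δF m)) ∧
  (∀ m, MemP1 m → ContDiff ℝ 1 (fun p : ℝ × ℝ => δ2F m p.1 p.2)) ∧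
  JointlyContinuous (fun m x => deriv (δF m) x) ∧
  JointlyContinuous2 (fun m x y => deriv (fun x' => δ2F m x' y) x) ∧
  JointlyContinuous2 (fun m x y => deriv (fun y' => δ2F m x y') y)

theorem aux_int_close {c : ℝ → ℝ} {c0 ε : ℝ} (hc : ContinuousOn c (Set.Icc 0 1))
    (h : ∀ t ∈ Set.Icc (0:ℝ) 1, |c t - c0| ≤ ε) : |(∫ t in (0:ℝ)..1, c t) - c0| ≤ ε := by
  have hi : IntervalIntegrable c volume 0 1 := by
    apply ContinuousOn.intervalIntegrable
    rwa [Set.uIcc_of_le zero_le_one]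
  have e : (∫ t in (0:ℝ)..1, c t) - c0 = ∫ t in (0:ℝ)..1, (c t - c0) := by
    rw [intervalIntegral.integral_sub hi intervalIntegrable_const]; simp
  rw [e]
  have := intervalIntegral.norm_integral_le_of_norm_le_const (a := (0:ℝ)) (b := 1) (C := ε)
    (f := fun t => c t - c0) (by
      intro t ht
      rw [Set.uIoc_of_le zero_le_one] at ht
      exact h t ⟨ht.1.le, ht.2⟩)
  simpa using this

theorem aux_first {ι : Type*} [Fintype ι] (φ : (ι → ℝ) → ℝ) (k : ι → (ι → ℝ) → ℝ)
    (hk : ∀ b, ContinuousOn (k b) (stdSimplex ℝ ι))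
    (hφ : ∀ p ∈ stdSimplex ℝ ι, ∀ q ∈ stdSimplex ℝ ι,
      φ q - φ p = ∫ t in (0:ℝ)..1, ∑ b, k b ((1 - t) • p + t • q) * (q b - p b))
    (p : ι → ℝ) (hp : p ∈ stdSimplex ℝ ι) (u : ι → ℝ) (ε : ℝ) (hε : 0 < ε) :
    ∃ δ > 0, ∀ q ∈ stdSimplex ℝ ι, ∀ h : ℝ, 0 < h → q + h • u ∈ stdSimplex ℝ ι →
      dist q p < δ → dist (q + h • u) p < δ →
      |φ (q + h • u) - φ q - h * ∑ b, k b p * u b| ≤ h * ε := by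
  have hK : ContinuousOn (fun q => ∑ b, k b q * u b) (stdSimplex ℝ ι) :=
    continuousOn_finsetSum _ fun b _ => (hk b).mul continuousOn_const
  obtain ⟨δ, hδ, H⟩ := Metric.continuousWithinAt_iff.1 (hK p hp) ε hε
  refine ⟨δ, hδ, fun q hq h hh hq' hd hd' => ?_⟩
  rw [hφ q hq _ hq']
  have hmem : ∀ t ∈ Set.Icc (0:ℝ) 1, (1 - t) • q + t • (q + h • u) ∈ stdSimplex ℝ ι :=
    fun t ht => convex_stdSimplex ℝ ι hq hq' (by linarith [ht.2]) ht.1 (by ring)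
  have hball : ∀ t ∈ Set.Icc (0:ℝ) 1, (1 - t) • q + t • (q + h • u) ∈ Metric.ball p δ :=
    fun t ht => convex_ball p δ (Metric.mem_ball.2 hd) (Metric.mem_ball.2 hd')
      (by linarith [ht.2]) ht.1 (by ring)
  apply aux_int_close
  · refine continuousOn_finsetSum _ fun b _ => ContinuousOn.mul ?_ continuousOn_const
    exact (hk b).comp (by fun_prop) hmem
  · intro t ht
    have := H (hmem t ht) (hball t ht)
    rw [Real.dist_eq] at this
    have e : ∑ b, k b ((1 - t) • q + t • (q + h • u)) * ((q + h • u) b - q b)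
        = h * ∑ b, k b ((1 - t) • q + t • (q + h • u)) * u b := by
      rw [Finset.mul_sum]
      refine Finset.sum_congr rfl fun b _ => ?_
      simp; ring
    rw [e, ← mul_sub, abs_mul, abs_of_pos hh]
    exact mul_le_mul_of_nonneg_left this.le hh.le

theorem aux_second {ι : Type*} [Fintype ι] (f : (ι → ℝ) → ℝ) (g : ι → (ι → ℝ) → ℝ)
    (k : ι → ι → (ι → ℝ) → ℝ)
    (hg : ∀ a, ContinuousOn (g a) (stdSimplex ℝ ι))
    (hk : ∀ a b, ContinuousOn (k a b) (stdSimplex ℝ ι))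
    (hf : ∀ p ∈ stdSimplex ℝ ι, ∀ q ∈ stdSimplex ℝ ι,
      f q - f p = ∫ t in (0:ℝ)..1, ∑ b, g b ((1 - t) • p + t • q) * (q b - p b))
    (hgk : ∀ a, ∀ p ∈ stdSimplex ℝ ι, ∀ q ∈ stdSimplex ℝ ι,
      g a q - g a p = ∫ t in (0:ℝ)..1, ∑ b, k a b ((1 - t) • p + t • q) * (q b - p b))
    (p : ι → ℝ) (hp : p ∈ stdSimplex ℝ ι) (u v : ι → ℝ)
    (huv : ∀ s t : ℝ, 0 ≤ s → s ≤ 1 / 2 → 0 ≤ t → t ≤ 1 / 2 →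
      p + s • u + t • v ∈ stdSimplex ℝ ι) (ε : ℝ) (hε : 0 < ε) :
    ∃ h0 > 0, ∀ h, 0 < h → h ≤ h0 →
      |f (p + h • u + h • v) - f (p + h • u) - f (p + h • v) + f p
        - h ^ 2 * ∑ a, (∑ b, k a b p * u b) * v a| ≤ h ^ 2 * (ε * ∑ a, |v a|) := by
  choose d hd H using fun a => aux_first (g a) (k a) (hk a) (hgk a) p hp u ε hε
  obtain ⟨δ, hδ, hδd⟩ : ∃ δ > 0, ∀ a, δ ≤ d a := by
    rcases isEmpty_or_nonempty ι with hι | hι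
    · exact ⟨1, one_pos, fun a => (hι.false a).elim⟩
    · obtain ⟨a, ha⟩ := Finite.exists_min d
      exact ⟨d a, hd a, ha⟩
  refine ⟨min (1/2) (δ / (‖u‖ + ‖v‖ + 1)), by positivity, fun h hh hle => ?_⟩
  have h2 : h ≤ 1 / 2 := hle.trans (min_le_left _ _)
  have h3 : h * (‖u‖ + ‖v‖ + 1) ≤ δ := by
    have := hle.trans (min_le_right _ _)
    rwa [le_div_iff₀ (by positivity)] at this
  have hclose : ∀ s t : ℝ, 0 ≤ s → s ≤ h → 0 ≤ t → t ≤ h → dist (p + s • u + t • v) p < δ := by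
    intro s t hs hs' ht ht'
    rw [dist_eq_norm]
    have : p + s • u + t • v - p = s • u + t • v := by abel
    rw [this]
    refine (norm_add_le _ _).trans_lt ?_
    rw [norm_smul, norm_smul, Real.norm_of_nonneg hs, Real.norm_of_nonneg ht]
    nlinarith [norm_nonneg u, norm_nonneg v]
  have m0 : ∀ t ∈ Set.Icc (0:ℝ) 1, p + (t * h) • v ∈ stdSimplex ℝ ι := fun t ht => by
    simpa using huv 0 (t * h) le_rfl (by norm_num) (mul_nonneg ht.1 hh.le) (by nlinarith [ht.2])
  have m1 : ∀ t ∈ Set.Icc (0:ℝ) 1, p + h • u + (t * h) • v ∈ stdSimplex ℝ ι := fun t ht =>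
    huv h (t * h) hh.le h2 (mul_nonneg ht.1 hh.le) (by nlinarith [ht.2])
  have one : (1:ℝ) ∈ Set.Icc (0:ℝ) 1 := by simp
  have zero : (0:ℝ) ∈ Set.Icc (0:ℝ) 1 := by simp
  have e1 := hf (p + h • u) (by simpa using m1 0 zero) (p + h • u + h • v) (by simpa using m1 1 one)
  have e2 := hf p hp (p + h • v) (by simpa using m0 1 one)
  have r1 : ∀ t : ℝ, (1 - t) • (p + h • u) + t • (p + h • u + h • v) = p + h • u + (t * h) • v := by
    intro t; module
  have r2 : ∀ t : ℝ, (1 - t) • p + t • (p + h • v) = p + (t * h) • v := by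
    intro t; module
  simp only [r1, r2] at e1 e2
  have c1 : ContinuousOn (fun t : ℝ => ∑ b, g b (p + h • u + (t * h) • v) *
      ((p + h • u + h • v) b - (p + h • u) b)) (Set.Icc 0 1) := by
    refine continuousOn_finsetSum _ fun b _ => ContinuousOn.mul ?_ continuousOn_const
    exact (hg b).comp (by fun_prop) m1
  have c2 : ContinuousOn (fun t : ℝ => ∑ b, g b (p + (t * h) • v) *
      ((p + h • v) b - p b)) (Set.Icc 0 1) := by
    refine continuousOn_finsetSum _ fun b _ => ContinuousOn.mul ?_ continuousOn_const
    exact (hg b).comp (by fun_prop) m0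
  have i1 := ((Set.uIcc_of_le (zero_le_one (α := ℝ))).symm ▸ c1 : ContinuousOn _ (Set.uIcc (0:ℝ) 1)).intervalIntegrable (μ := volume)
  have i2 := ((Set.uIcc_of_le (zero_le_one (α := ℝ))).symm ▸ c2 : ContinuousOn _ (Set.uIcc (0:ℝ) 1)).intervalIntegrable (μ := volume)
  have e : f (p + h • u + h • v) - f (p + h • u) - f (p + h • v) + f p
      = ∫ t in (0:ℝ)..1, ((∑ b, g b (p + h • u + (t * h) • v) *
      ((p + h • u + h • v) b - (p + h • u) b)) - ∑ b, g b (p + (t * h) • v) *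
      ((p + h • v) b - p b)) := by
    rw [intervalIntegral.integral_sub i1 i2, ← e1, ← e2]; ring
  rw [e]
  apply aux_int_close (c1.sub c2)
  intro t ht
  have hth : 0 ≤ t * h := mul_nonneg ht.1 hh.le
  have hth' : t * h ≤ h := by nlinarith [ht.2]
  have key : ∀ a, |g a (p + h • u + (t * h) • v) - g a (p + (t * h) • v)
      - h * ∑ b, k a b p * u b| ≤ h * ε := by
    intro a
    have r : p + (t * h) • v + h • u = p + h • u + (t * h) • v := by abel
    have := H a (p + (t * h) • v) (m0 t ht) h hh (by rw [r]; exact m1 t ht)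
      (lt_of_lt_of_le (by simpa using hclose 0 (t * h) le_rfl hh.le hth hth') (hδd a))
      (by rw [r]; exact lt_of_lt_of_le (hclose h (t * h) hh.le le_rfl hth hth') (hδd a))
    rwa [r] at this
  have e3 : ((∑ b, g b (p + h • u + (t * h) • v) *
      ((p + h • u + h • v) b - (p + h • u) b)) - ∑ b, g b (p + (t * h) • v) *
      ((p + h • v) b - p b)) - h ^ 2 * ∑ a, (∑ b, k a b p * u b) * v a
      = ∑ a, (g a (p + h • u + (t * h) • v) - g a (p + (t * h) • v)
      - h * ∑ b, k a b p * u b) * (h * v a) := by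
    rw [Finset.mul_sum, ← Finset.sum_sub_distrib, ← Finset.sum_sub_distrib]
    refine Finset.sum_congr rfl fun a _ => ?_
    simp only [Pi.add_apply, Pi.smul_apply, smul_eq_mul]
    ring
  rw [Pi.sub_apply, e3]
  refine (Finset.abs_sum_le_sum_abs _ _).trans ?_
  rw [Finset.mul_sum, Finset.mul_sum]
  refine Finset.sum_le_sum fun a _ => ?_
  rw [abs_mul, abs_mul, abs_of_pos hh]
  have := mul_le_mul_of_nonneg_right (key a) (show 0 ≤ h * |v a| by positivity)
  refine this.trans (le_of_eq (by ring))

theorem aux_eq_of_eps {X Y C : ℝ} (h : ∀ ε > 0, |X - Y| ≤ ε * C) : X = Y := by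
  by_contra hne
  have hpos : 0 < |X - Y| := abs_pos.2 (sub_ne_zero.2 hne)
  have := h (|X - Y| / (2 * (|C| + 1))) (by positivity)
  have h2 : |X - Y| / (2 * (|C| + 1)) * C ≤ |X - Y| / (2 * (|C| + 1)) * (|C| + 1) :=
    mul_le_mul_of_nonneg_left (by linarith [le_abs_self C]) (by positivity)
  have h3 : |X - Y| / (2 * (|C| + 1)) * (|C| + 1) = |X - Y| / 2 := by
    field_simp
  linarith

theorem aux_simplex {ι : Type*} [Fintype ι] (f : (ι → ℝ) → ℝ) (g : ι → (ι → ℝ) → ℝ)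
    (k : ι → ι → (ι → ℝ) → ℝ)
    (hg : ∀ a, ContinuousOn (g a) (stdSimplex ℝ ι))
    (hk : ∀ a b, ContinuousOn (k a b) (stdSimplex ℝ ι))
    (hf : ∀ p ∈ stdSimplex ℝ ι, ∀ q ∈ stdSimplex ℝ ι,
      f q - f p = ∫ t in (0:ℝ)..1, ∑ b, g b ((1 - t) • p + t • q) * (q b - p b))
    (hgk : ∀ a, ∀ p ∈ stdSimplex ℝ ι, ∀ q ∈ stdSimplex ℝ ι,
      g a q - g a p = ∫ t in (0:ℝ)..1, ∑ b, k a b ((1 - t) • p + t • q) * (q b - p b))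
    (hg0 : ∀ p ∈ stdSimplex ℝ ι, ∑ a, p a * g a p = 0)
    (hk0 : ∀ a, ∀ p ∈ stdSimplex ℝ ι, ∑ b, p b * k a b p = 0)
    (p : ι → ℝ) (hp : p ∈ stdSimplex ℝ ι) (i j : ι) :
    k i j p - g i p = k j i p - g j p := by
  classical
  have hv : ∀ i j : ι, ∀ s t : ℝ, 0 ≤ s → s ≤ 1 / 2 → 0 ≤ t → t ≤ 1 / 2 →
      p + s • (Pi.single i 1 - p) + t • (Pi.single j 1 - p) ∈ stdSimplex ℝ ι := by
    intro i j s t hs hs' ht ht'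
    have hi := single_mem_stdSimplex ℝ i
    have hj := single_mem_stdSimplex ℝ j
    refine ⟨fun a => ?_, ?_⟩
    · have h1 := hp.1 a
      have h2 := hi.1 a
      have h3 := hj.1 a
      simp only [Pi.add_apply, Pi.smul_apply, Pi.sub_apply, smul_eq_mul]
      nlinarith [mul_nonneg hs h2, mul_nonneg ht h3, mul_nonneg (show 0 ≤ 1 - s - t by linarith) h1]
    · simp only [Pi.add_apply, Pi.smul_apply, Pi.sub_apply, smul_eq_mul, Finset.sum_add_distrib,
        ← Finset.mul_sum, Finset.sum_sub_distrib, hp.2, hi.2, hj.2]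
      ring
  have hku : ∀ a i, ∑ b, k a b p * ((Pi.single i 1 - p : ι → ℝ) b) = k a i p := by
    intro a i
    simp only [Pi.sub_apply, mul_sub, Finset.sum_sub_distrib]
    have := hk0 a p hp
    simp only [mul_comm (p _)] at this
    rw [this]
    simp [Pi.single_apply]
  -- symmetry
  have sym : ∑ a, k a i p * ((Pi.single j 1 - p : ι → ℝ) a)
      = ∑ a, k a j p * ((Pi.single i 1 - p : ι → ℝ) a) := by
    apply aux_eq_of_eps (C := (∑ a, |(Pi.single j 1 - p : ι → ℝ) a|)
      + ∑ a, |(Pi.single i 1 - p : ι → ℝ) a|)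
    intro ε hε
    obtain ⟨h1, hh1, H1⟩ := aux_second f g k hg hk hf hgk p hp _ _ (hv i j) ε hε
    obtain ⟨h2, hh2, H2⟩ := aux_second f g k hg hk hf hgk p hp _ _ (hv j i) ε hε
    have hm : 0 < min h1 h2 := lt_min hh1 hh2
    have K1 := H1 _ hm (min_le_left _ _)
    have K2 := H2 _ hm (min_le_right _ _)
    simp only [hku] at K1 K2
    generalize min h1 h2 = h at *
    rw [add_right_comm p] at K2
    generalize f _ = A1 at *
    have hsq : 0 < h ^ 2 := by positivity
    refine le_of_mul_le_mul_left ?_ hsq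
    rw [← abs_of_pos hsq, ← abs_mul, abs_of_pos hsq]
    rw [abs_le] at *
    constructor <;> linarith [K1.1, K1.2, K2.1, K2.2]
  -- differentiate the normalization
  have norm0 : ∀ i, ∑ a, p a * k a i p = - g i p := by
    intro i
    set u : ι → ℝ := Pi.single i 1 - p with hu
    have hug : ∑ a, u a * g a p = g i p := by
      simp only [hu, Pi.sub_apply, sub_mul, Finset.sum_sub_distrib, hg0 p hp]
      simp [Pi.single_apply]
    rw [← hug]
    have hcu : ContinuousOn (fun q => ∑ a, u a * g a q) (stdSimplex ℝ ι) :=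
      continuousOn_finsetSum _ fun a _ => continuousOn_const.mul (hg a)
    apply aux_eq_of_eps (C := 2)
    intro ε hε
    obtain ⟨d', hd', H'⟩ := Metric.continuousWithinAt_iff.1 (hcu p hp) ε hε
    choose d hd H using fun a => aux_first (g a) (k a) (hk a) (hgk a) p hp u ε hε
    obtain ⟨δ, hδ, hδd⟩ : ∃ δ > 0, ∀ a, δ ≤ d a := by
      obtain ⟨a, ha⟩ := @Finite.exists_min _ _ _ ⟨i⟩ _ d
      exact ⟨d a, hd a, ha⟩
    obtain ⟨h, hh, h2, h3⟩ : ∃ h : ℝ, 0 < h ∧ h ≤ 1 / 2 ∧ h * (‖u‖ + 1) ≤ min δ d' := by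
      refine ⟨min (1/2) (min δ d' / (‖u‖ + 1)), by positivity, min_le_left _ _, ?_⟩
      rw [← le_div_iff₀ (by positivity)]
      exact min_le_right _ _
    have hq : p + h • u ∈ stdSimplex ℝ ι := by
      simpa using hv i i h 0 hh.le h2 le_rfl (by norm_num)
    have hdist : dist (p + h • u) p < min δ d' := by
      rw [dist_eq_norm, add_sub_cancel_left, norm_smul, Real.norm_of_nonneg hh.le]
      linarith
    have B := H' hq (hdist.trans_le (min_le_right _ _))
    rw [Real.dist_eq] at B
    have A : ∀ a, |g a (p + h • u) - g a p - h * k a i p| ≤ h * ε := by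
      intro a
      have := H a p hp h hh hq (by simpa using hd a)
        ((hdist.trans_le (min_le_left _ _)).trans_le (hδd a))
      rwa [hku] at this
    have S : |∑ a, p a * (g a (p + h • u) - g a p - h * k a i p)| ≤ h * ε := by
      calc _ ≤ ∑ a, p a * (h * ε) := by
            refine (Finset.abs_sum_le_sum_abs _ _).trans (Finset.sum_le_sum fun a _ => ?_)
            rw [abs_mul, abs_of_nonneg (hp.1 a)]
            exact mul_le_mul_of_nonneg_left (A a) (hp.1 a)
        _ = h * ε := by rw [← Finset.sum_mul, hp.2, one_mul]
    have E := hg0 _ hq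
    simp only [Pi.add_apply, Pi.smul_apply, smul_eq_mul, add_mul, mul_assoc,
      Finset.sum_add_distrib, ← Finset.mul_sum] at E
    have E' : ∑ a, p a * (g a (p + h • u) - g a p - h * k a i p)
        = - (h * ∑ a, u a * g a (p + h • u)) - h * ∑ a, p a * k a i p := by
      simp only [mul_sub, Finset.sum_sub_distrib, hg0 p hp]
      have : ∑ a, p a * (h * k a i p) = h * ∑ a, p a * k a i p := by
        rw [Finset.mul_sum]; exact Finset.sum_congr rfl fun a _ => by ring
      rw [this]; linarith
    rw [E'] at S
    refine le_of_mul_le_mul_left ?_ hh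
    rw [← abs_of_pos hh, ← abs_mul, abs_of_pos hh]
    have B' : |h * ∑ a, u a * g a (p + h • u) - h * ∑ a, u a * g a p| ≤ h * ε := by
      rw [← mul_sub, abs_mul, abs_of_pos hh]
      exact mul_le_mul_of_nonneg_left B.le hh.le
    rw [abs_le] at *
    constructor <;> linarith [S.1, S.2, B'.1, B'.2]
  have fin : ∀ i j, ∑ a, k a i p * ((Pi.single j 1 - p : ι → ℝ) a) = k j i p + g i p := by
    intro i j
    simp only [Pi.sub_apply, mul_sub, Finset.sum_sub_distrib]
    have := norm0 i
    simp only [mul_comm (p _)] at this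
    rw [this]
    simp [Pi.single_apply]
  rw [fin, fin] at sym
  linarith

/-- A finitely supported measure with weights `p` at the points `e`. -/
noncomputable def auxM {ι α : Type*} [Fintype ι] [MeasurableSpace α] (e : ι → α) (p : ι → ℝ) :
    Measure α := ∑ i, ENNReal.ofReal (p i) • Measure.dirac (e i)

theorem auxM_integrable {ι α : Type*} [Fintype ι] [MeasurableSpace α] [MeasurableSingletonClass α]
    (e : ι → α) (p : ι → ℝ) (f : α → ℝ) : Integrable f (auxM e p) := by
  unfold auxM
  rw [integrable_finsetSum_measure]
  intro i _
  exact (integrable_dirac (by simp)).smul_measure ENNReal.ofReal_ne_top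

theorem auxM_integral {ι α : Type*} [Fintype ι] [MeasurableSpace α] [MeasurableSingletonClass α]
    (e : ι → α) (p : ι → ℝ) (hp : ∀ i, 0 ≤ p i) (f : α → ℝ) :
    ∫ x, f x ∂(auxM e p) = ∑ i, p i * f (e i) := by
  unfold auxM
  rw [integral_finsetSum_measure]
  · simp [hp]
  · intro i _
    exact (integrable_dirac (by simp)).smul_measure ENNReal.ofReal_ne_top

theorem auxM_apply {ι α : Type*} [Fintype ι] [MeasurableSpace α]
    (e : ι → α) (p : ι → ℝ) (A : Set α) (hA : MeasurableSet A) :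
    auxM e p A = ∑ i, ENNReal.ofReal (p i) * A.indicator 1 (e i) := by
  simp [auxM, Measure.dirac_apply' _ hA]

theorem auxM_memP1 {ι : Type*} [Fintype ι] (e : ι → ℝ) (p : ι → ℝ) (hp : p ∈ stdSimplex ℝ ι) :
    MemP1 (auxM e p) := by
  refine ⟨⟨?_⟩, auxM_integrable _ _ _⟩
  rw [auxM_apply _ _ _ MeasurableSet.univ]
  simp only [Set.indicator_univ, Pi.one_apply, mul_one]
  rw [← ENNReal.ofReal_sum_of_nonneg fun i _ => hp.1 i, hp.2, ENNReal.ofReal_one]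

theorem auxM_lineSeg {ι : Type*} [Fintype ι] (e : ι → ℝ) (p q : ι → ℝ)
    (hp : ∀ i, 0 ≤ p i) (hq : ∀ i, 0 ≤ q i) (t : ℝ) (ht : t ∈ Set.Icc (0:ℝ) 1) :
    lineSeg (auxM e p) (auxM e q) t = auxM e ((1 - t) • p + t • q) := by
  have h1 : 0 ≤ 1 - t := by linarith [ht.2]
  unfold lineSeg auxM
  rw [Finset.smul_sum, Finset.smul_sum, ← Finset.sum_add_distrib]
  refine Finset.sum_congr rfl fun i _ => ?_
  simp only [Pi.add_apply, Pi.smul_apply, smul_eq_mul]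
  rw [ENNReal.ofReal_add (mul_nonneg h1 (hp i)) (mul_nonneg ht.1 (hq i)),
    ENNReal.ofReal_mul h1, ENNReal.ofReal_mul ht.1, add_smul, mul_smul, mul_smul]

theorem W1_le_of_coupling (m μ : Measure ℝ) (π : Measure (ℝ × ℝ)) (h : IsCoupling π m μ) :
    W1 m μ ≤ ∫ p, |p.1 - p.2| ∂π := by
  refine csInf_le ⟨0, ?_⟩ ⟨π, h, rfl⟩
  rintro c ⟨π, _, rfl⟩
  exact integral_nonneg fun p => abs_nonneg _

theorem auxM_W1_le {ι : Type*} [Fintype ι] (e : ι → ℝ) (p q : ι → ℝ) (c : ι → ι → ℝ)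
    (hc : ∀ i j, 0 ≤ c i j) (h1 : ∀ i, ∑ j, c i j = p i) (h2 : ∀ j, ∑ i, c i j = q j) :
    W1 (auxM e p) (auxM e q) ≤ ∑ i, ∑ j, c i j * |e i - e j| := by
  have := W1_le_of_coupling (auxM e p) (auxM e q)
    (auxM (fun x : ι × ι => (e x.1, e x.2)) (fun x => c x.1 x.2)) ⟨?_, ?_⟩
  · rwa [auxM_integral _ _ (fun x => hc _ _), Fintype.sum_prod_type] at this
  · ext A hA
    rw [Measure.map_apply measurable_fst hA, auxM_apply _ _ _ (measurable_fst hA),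
      auxM_apply _ _ _ hA, Fintype.sum_prod_type]
    refine Finset.sum_congr rfl fun i _ => ?_
    rw [← h1, ENNReal.ofReal_sum_of_nonneg fun j _ => hc _ _, Finset.sum_mul]
    rfl
  · ext A hA
    rw [Measure.map_apply measurable_snd hA, auxM_apply _ _ _ (measurable_snd hA),
      auxM_apply _ _ _ hA, Fintype.sum_prod_type_right]
    refine Finset.sum_congr rfl fun j _ => ?_
    rw [← h2, ENNReal.ofReal_sum_of_nonneg fun j _ => hc _ _, Finset.sum_mul]
    rfl

theorem auxM_W1_bound {ι : Type*} [Fintype ι] (e : ι → ℝ) : ∃ K > 0, ∀ p ∈ stdSimplex ℝ ι,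
    ∀ q ∈ stdSimplex ℝ ι, W1 (auxM e p) (auxM e q) ≤ K * dist p q := by
  classical
  refine ⟨(∑ i, ∑ j, |e i - e j|) + 1, by positivity, fun p hp q hq => ?_⟩
  set a : ι → ℝ := fun i => max (p i - q i) 0 with ha
  set b : ι → ℝ := fun i => max (q i - p i) 0 with hb
  set d := ∑ i, a i with hd
  have ha0 : ∀ i, 0 ≤ a i := fun i => le_max_right _ _
  have hb0 : ∀ i, 0 ≤ b i := fun i => le_max_right _ _
  have hab : ∀ i, a i - b i = p i - q i := by
    intro i
    simp only [ha, hb]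
    rcases le_total (p i) (q i) with h | h
    · rw [max_eq_right (by linarith), max_eq_left (by linarith)]; ring
    · rw [max_eq_left (by linarith), max_eq_right (by linarith)]; ring
  have hdb : ∑ i, b i = d := by
    have : ∑ i, (a i - b i) = ∑ i, (p i - q i) := Finset.sum_congr rfl fun i _ => hab i
    rw [Finset.sum_sub_distrib, Finset.sum_sub_distrib, hp.2, hq.2] at this
    linarith
  have had : ∀ i, a i ≤ d := fun i => Finset.single_le_sum (fun j _ => ha0 j) (Finset.mem_univ i)
  have hbd : ∀ i, b i ≤ d := fun i => by
    rw [← hdb]; exact Finset.single_le_sum (fun j _ => hb0 j) (Finset.mem_univ i)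
  have hd0 : 0 ≤ d := Finset.sum_nonneg fun i _ => ha0 i
  have had' : ∀ i, a i * d / d = a i := fun i => by
    rcases hd0.eq_or_lt with h | h
    · have := had i; rw [← h] at this ⊢; simp; linarith [ha0 i]
    · field_simp
  have hbd' : ∀ i, b i * d / d = b i := fun i => by
    rcases hd0.eq_or_lt with h | h
    · have := hbd i; rw [← h] at this ⊢; simp; linarith [hb0 i]
    · field_simp
  have hpa : ∀ i, a i ≤ p i := fun i => max_le (by linarith [hq.1 i]) (hp.1 i)
  have hle := auxM_W1_le e p q
    (fun i j => (if i = j then p i - a i else 0) + a i * b j / d) (by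
      intro i j
      have := hpa i
      have h1 := ha0 i
      have h2 := hb0 j
      refine add_nonneg ?_ (by positivity)
      split_ifs <;> linarith) (by
      intro i
      rw [Finset.sum_add_distrib, ← Finset.sum_div, ← Finset.mul_sum, hdb, had']
      simp) (by
      intro j
      rw [Finset.sum_add_distrib, ← Finset.sum_div, ← Finset.sum_mul, ← hd, mul_comm, hbd']
      simp only [Finset.sum_ite_eq', Finset.mem_univ, if_true]
      linarith [hab j])
  refine hle.trans ?_
  have hdist : ∀ j, b j ≤ dist p q := fun j => by
    refine max_le ?_ dist_nonneg
    have := dist_le_pi_dist p q j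
    rw [Real.dist_eq] at this
    linarith [neg_abs_le (p j - q j)]
  rw [add_mul, Finset.sum_mul]
  refine le_trans ?_ (le_add_of_nonneg_right (by simp))
  refine Finset.sum_le_sum fun i _ => ?_
  rw [Finset.sum_mul]
  refine Finset.sum_le_sum fun j _ => ?_
  rw [mul_comm |e i - e j|]
  by_cases hij : i = j
  · simp [hij]
  · rw [if_neg hij, zero_add]
    refine mul_le_mul_of_nonneg_right ?_ (abs_nonneg _)
    refine le_trans ?_ (hdist j)
    rcases hd0.eq_or_lt with h | h
    · rw [← h]; simpa using hb0 j
    · rw [div_le_iff₀ h, mul_comm]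
      exact mul_le_mul_of_nonneg_left (had i) (hb0 j)

theorem auxM_continuousOn {ι : Type*} [Fintype ι] (e : ι → ℝ) (G : Measure ℝ → ℝ)
    (hG : ∀ m, MemP1 m → W1ContinuousAt G m) :
    ContinuousOn (fun p => G (auxM e p)) (stdSimplex ℝ ι) := by
  obtain ⟨K, hK, H⟩ := auxM_W1_bound e
  intro p hp
  rw [Metric.continuousWithinAt_iff]
  intro ε hε
  obtain ⟨η, hη, h⟩ := hG _ (auxM_memP1 e p hp) ε hε
  refine ⟨η / K, by positivity, fun q hq hd => ?_⟩
  rw [Real.dist_eq]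
  refine h _ (auxM_memP1 e q hq) ((H q hq p hp).trans_lt ?_)
  rwa [lt_div_iff₀ hK, mul_comm] at hd

theorem auxM_deriv {ι : Type*} [Fintype ι] (e : ι → ℝ) (G : Measure ℝ → ℝ)
    (H : Measure ℝ → ℝ → ℝ) (hG : IsDerivVersion G H)
    (p : ι → ℝ) (hp : p ∈ stdSimplex ℝ ι) (q : ι → ℝ) (hq : q ∈ stdSimplex ℝ ι) :
    G (auxM e q) - G (auxM e p) =
      ∫ t in (0:ℝ)..1, ∑ b, H (auxM e ((1 - t) • p + t • q)) (e b) * (q b - p b) := by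
  rw [hG.2.2 _ _ (auxM_memP1 e q hq) (auxM_memP1 e p hp)]
  refine intervalIntegral.integral_congr fun t ht => ?_
  rw [Set.uIcc_of_le zero_le_one] at ht
  simp only [dInt]
  rw [auxM_lineSeg e p q hp.1 hq.1 t ht, auxM_integral _ _ hp.1, auxM_integral _ _ hq.1,
    ← Finset.sum_sub_distrib]
  exact Finset.sum_congr rfl fun i _ => by ring

theorem auxM_symm {ι : Type*} [Fintype ι] (e : ι → ℝ) (F : Measure ℝ → ℝ) (δF : Measure ℝ → ℝ → ℝ)
    (δ2F : Measure ℝ → ℝ → ℝ → ℝ) (hF : IsC2 F δF δ2F) (p : ι → ℝ) (hp : p ∈ stdSimplex ℝ ι)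
    (i j : ι) : δ2F (auxM e p) (e i) (e j) - δF (auxM e p) (e i)
      = δ2F (auxM e p) (e j) (e i) - δF (auxM e p) (e j) := by
  obtain ⟨h1, h2, -, h4, h5, -⟩ := hF
  refine aux_simplex (fun p => F (auxM e p)) (fun a p => δF (auxM e p) (e a))
    (fun a b p => δ2F (auxM e p) (e a) (e b)) (fun a => ?_) (fun a b => ?_) ?_ (fun a => ?_)
    (fun p hp => ?_) (fun a p hp => ?_) p hp i j
  · exact auxM_continuousOn e (fun m => δF m (e a)) (h4 _)
  · exact auxM_continuousOn e (fun m => δ2F m (e a) (e b)) (h5 _ _)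
  · exact auxM_deriv e F δF h1.1
  · exact auxM_deriv e _ _ (h2 (e a)).1
  · rw [← auxM_integral e p hp.1]
    exact h1.2 _ (auxM_memP1 e p hp)
  · rw [← auxM_integral e p hp.1 (fun y => δ2F (auxM e p) (e a) y)]
    exact (h2 (e a)).2 _ (auxM_memP1 e p hp)

theorem aux_map_simple (m : Measure ℝ) [IsProbabilityMeasure m] (T : SimpleFunc ℝ ℝ) (s : Finset ℝ)
    (hs : ∀ z, T z ∈ s) :
    auxM (fun r : s => (r : ℝ)) (fun r => m.real (T ⁻¹' {(r : ℝ)})) = m.map T := by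
  classical
  ext A hA
  rw [auxM_apply _ _ _ hA, Measure.map_apply T.measurable hA]
  have hB : ∀ B : Set ℝ, ENNReal.ofReal (m.real B) = m B := fun B => ofReal_measureReal
  simp only [hB]
  rw [Finset.sum_coe_sort s (fun r => m (T ⁻¹' {r}) * A.indicator 1 r)]
  simp only [Set.indicator_apply, Pi.one_apply, mul_ite, mul_one, mul_zero]
  rw [← Finset.sum_filter, T.sum_measure_preimage_singleton]
  congr 1
  ext z
  simp [hs z]

theorem aux_approx (m : Measure ℝ) (hm : MemP1 m) (x y : ℝ) (η : ℝ) (hη : 0 < η) :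
    ∃ s : Finset ℝ, x ∈ s ∧ y ∈ s ∧ ∃ p ∈ stdSimplex ℝ s,
      W1 (auxM (fun r : s => (r : ℝ)) p) m < η := by
  classical
  have := hm.1
  have hid : Integrable (fun x : ℝ => x) m :=
    (integrable_norm_iff measurable_id.aestronglyMeasurable).1 hm.2
  have ht := SimpleFunc.tendsto_approxOn_range_L1_enorm (f := fun x : ℝ => x) measurable_id hid
  obtain ⟨n, hn⟩ := (ht.eventually (gt_mem_nhds (ENNReal.ofReal_pos.2 hη))).exists
  obtain ⟨T, hT⟩ : ∃ T : SimpleFunc ℝ ℝ, ∫⁻ z, ‖T z - z‖ₑ ∂m < ENNReal.ofReal η := ⟨_, hn⟩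
  have e := aux_map_simple m T (insert x (insert y T.range)) (fun z => by simp)
  refine ⟨insert x (insert y T.range), by simp, by simp, fun r => m.real (T ⁻¹' {(r : ℝ)}),
    ⟨fun r => measureReal_nonneg, ?_⟩, ?_⟩
  · have h1 := auxM_integral (fun r : (insert x (insert y T.range) : Finset ℝ) => (r : ℝ))
      (fun r => m.real (T ⁻¹' {(r : ℝ)})) (fun r => measureReal_nonneg) (fun _ => 1)
    have : IsProbabilityMeasure (m.map T) :=
      Measure.isProbabilityMeasure_map T.measurable.aemeasurable
    rw [e] at h1
    simp only [integral_const, probReal_univ, smul_eq_mul, mul_one] at h1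
    exact h1.symm
  · rw [e]
    have mT : Measurable T := T.measurable
    have hc := W1_le_of_coupling (m.map T) m (m.map fun z => (T z, z)) ⟨?_, ?_⟩
    · refine hc.trans_lt ?_
      rw [integral_map (by fun_prop) (by fun_prop)]
      have := integral_norm_eq_lintegral_enorm (μ := m) (f := fun z => T z - z)
        (by fun_prop)
      simp only [Real.norm_eq_abs] at this
      rw [this]
      exact (ENNReal.lt_ofReal_iff_toReal_lt hT.ne_top).1 hT
    · rw [Measure.map_map measurable_fst (by fun_prop)]; rfl
    · rw [Measure.map_map measurable_snd (by fun_prop)]; exact Measure.map_id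

/-- symmetry of the second-order derivative: for `F` of class `C²`,
`δ²F(m,x,y) - δF(m,x) = δ²F(m,y,x) - δF(m,y)` for every `m ∈ P₁(ℝ)` and `x, y ∈ ℝ`. -/
theorem stmt14 (F : Measure ℝ → ℝ) (δF : Measure ℝ → ℝ → ℝ)
    (δ2F : Measure ℝ → ℝ → ℝ → ℝ) (hF : IsC2 F δF δ2F) :
    ∀ m, MemP1 m → ∀ x y : ℝ,
      δ2F m x y - δF m x = δ2F m y x - δF m y := by
  intro m hm x y
  obtain ⟨-, -, -, h4, h5, -⟩ := id hF
  apply aux_eq_of_eps (C := 4)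
  intro ε hε
  obtain ⟨η1, hη1, H1⟩ := h5 x y m hm ε hε
  obtain ⟨η2, hη2, H2⟩ := h5 y x m hm ε hε
  obtain ⟨η3, hη3, H3⟩ := h4 x m hm ε hε
  obtain ⟨η4, hη4, H4⟩ := h4 y m hm ε hε
  obtain ⟨s, hx, hy, p, hp, hW⟩ := aux_approx m hm x y (min (min η1 η2) (min η3 η4)) (by positivity)
  have hP := auxM_memP1 (fun r : s => (r : ℝ)) p hp
  simp only [lt_min_iff] at hW
  have K1 := H1 _ hP hW.1.1
  have K2 := H2 _ hP hW.1.2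
  have K3 := H3 _ hP hW.2.1
  have K4 := H4 _ hP hW.2.2
  have E := auxM_symm (fun r : s => (r : ℝ)) F δF δ2F hF p hp ⟨x, hx⟩ ⟨y, hy⟩
  simp only at E K1 K2 K3 K4
  rw [abs_lt] at K1 K2 K3 K4
  rw [abs_le]
  constructor <;> linarith [K1.1, K1.2, K2.1, K2.2, K3.1, K3.2, K4.1, K4.2]
end
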